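/- Let n ≥ 2 and let α, β ∈ UVP_n. Then α and β are fused Markov equivalent if and only if there exists a permutation π ∈ S_n such that s(π) α s(π)^{−1} β^{−1} ∈ [UVP_n, UVP_n]. In other words, two pure unrestricted virtual braids on n strands have equivalent closures as fused links exactly when their images in the abelianization UVP_n/[UVP_n,UVP_n] are conjugate by an element of S_n ≤ UVB_n. -/

import Mathlib

/-!  Common setup: the unrestricted virtual braid group `UVB n`, its generators
σ_k, ρ_k (1-based indices), the elements λ_{i,j} and B_{i,j}, the permutation
homomorphism ι (characterized by `IsIota`), the section s : S_n → UVB n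
(characterized by `IsPermSection`), and fused Markov equivalence. -/

/-- Generators of the unrestricted virtual braid group `UVB n`:
`Sum.inl i` is the classical generator σ_{i+1} and `Sum.inr i` is the virtual
generator ρ_{i+1}, for `i : Fin (n-1)` (so the 1-based indices are `1, …, n-1`). -/
abbrev UVBGen (n : ℕ) := Sum (Fin (n - 1)) (Fin (n - 1))

namespace UVBGen
def sg {n : ℕ} (i : Fin (n - 1)) : FreeGroup (UVBGen n) := FreeGroup.of (Sum.inl i)
def rg {n : ℕ} (i : Fin (n - 1)) : FreeGroup (UVBGen n) := FreeGroup.of (Sum.inr i)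
end UVBGen

open UVBGen in
/-- The defining relations of the unrestricted virtual braid group. -/
def uvbRels (n : ℕ) : Set (FreeGroup (UVBGen n)) :=
  {r | (∃ i j : Fin (n - 1), (j : ℕ) = (i : ℕ) + 1 ∧
          (r = sg i * sg j * sg i * (sg j * sg i * sg j)⁻¹ ∨
           r = rg i * rg j * rg i * (rg j * rg i * rg j)⁻¹ ∨
           r = rg i * rg j * sg i * (sg j * rg i * rg j)⁻¹ ∨
           r = rg i * sg j * sg i * (sg j * sg i * rg j)⁻¹ ∨
           r = rg j * sg i * sg j * (sg i * sg j * rg i)⁻¹)) ∨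
       (∃ i j : Fin (n - 1), ((i : ℕ) + 2 ≤ (j : ℕ) ∨ (j : ℕ) + 2 ≤ (i : ℕ)) ∧
          (r = sg i * sg j * (sg j * sg i)⁻¹ ∨
           r = rg i * rg j * (rg j * rg i)⁻¹ ∨
           r = sg i * rg j * (rg j * sg i)⁻¹)) ∨
       (∃ i : Fin (n - 1), r = rg i * rg i)}

/-- The unrestricted virtual braid group on `n` strands. -/
abbrev UVB (n : ℕ) := PresentedGroup (uvbRels n)

namespace UVB

/-- The generator σ_k (1-based index; meaningful for `1 ≤ k ≤ n-1`, junk value `1` otherwise). -/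
def sigma (n k : ℕ) : UVB n :=
  if h : 1 ≤ k ∧ k ≤ n - 1 then PresentedGroup.of (Sum.inl ⟨k - 1, by omega⟩) else 1

/-- The generator ρ_k (1-based index; meaningful for `1 ≤ k ≤ n-1`, junk value `1` otherwise). -/
def rho (n k : ℕ) : UVB n :=
  if h : 1 ≤ k ∧ k ≤ n - 1 then PresentedGroup.of (Sum.inr ⟨k - 1, by omega⟩) else 1

/-- The element λ_{i,j} of `UVB n` (1-based indices `1 ≤ i ≠ j ≤ n`; junk value `1` if `i = j`).
For `i < j`:  `λ_{i,j} = ρ_{j-1}⋯ρ_{i+1} · ρ_i σ_i⁻¹ · ρ_{i+1}⋯ρ_{j-1}` and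
`λ_{j,i} = ρ_{j-1}⋯ρ_{i+1} · σ_i⁻¹ ρ_i · ρ_{i+1}⋯ρ_{j-1}`. -/
def lam (n i j : ℕ) : UVB n :=
  if i < j then
    (((List.range' (i + 1) (j - 1 - i)).reverse.map (rho n)).prod) *
      (rho n i * (sigma n i)⁻¹) *
      (((List.range' (i + 1) (j - 1 - i)).map (rho n)).prod)
  else if j < i then
    (((List.range' (j + 1) (i - 1 - j)).reverse.map (rho n)).prod) *
      ((sigma n j)⁻¹ * rho n j) *
      (((List.range' (j + 1) (i - 1 - j)).map (rho n)).prod)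
  else 1

/-- The element `B_{i,j} = ρ_{j-1}ρ_{j-2}⋯ρ_{i+1}ρ_i` for `i < j`, and `1` otherwise. -/
def B (n i j : ℕ) : UVB n :=
  if i < j then ((List.range' i (j - i)).reverse.map (rho n)).prod else 1

/-- The subgroup `U_j` of `UVB n` generated by `{λ_{i,j}, λ_{j,i} : 1 ≤ i < j}`. -/
def U (n j : ℕ) : Subgroup (UVB n) :=
  Subgroup.closure {x | ∃ i, 1 ≤ i ∧ i < j ∧ (x = lam n i j ∨ x = lam n j i)}

end UVB

/-- `ι : UVB n →* S_n` is the homomorphism sending σ_k and ρ_k to the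
transposition (k, k+1) (written 0-based on `Fin n`). -/
def IsIota (n : ℕ) (ι : UVB n →* Equiv.Perm (Fin n)) : Prop :=
  ∀ (k : ℕ) (h1 : 1 ≤ k) (h2 : k ≤ n - 1),
    ι (UVB.sigma n k) = Equiv.swap ⟨k - 1, by omega⟩ ⟨k, by omega⟩ ∧
    ι (UVB.rho n k) = Equiv.swap ⟨k - 1, by omega⟩ ⟨k, by omega⟩

/-- `s : S_n →* UVB n` is the homomorphism sending the transposition (k, k+1) to ρ_k. -/
def IsPermSection (n : ℕ) (s : Equiv.Perm (Fin n) →* UVB n) : Prop :=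
  ∀ (k : ℕ) (h1 : 1 ≤ k) (h2 : k ≤ n - 1),
    s (Equiv.swap ⟨k - 1, by omega⟩ ⟨k, by omega⟩) = UVB.rho n k

/-- The number of orbits of a permutation of `Fin n`
(= number of fixed points + number of nontrivial cycles). -/
def numOrbits {n : ℕ} (π : Equiv.Perm (Fin n)) : ℕ :=
  (Finset.univ.filter fun x => π x = x).card + π.cycleType.card

namespace UVB

private def embedGen (n : ℕ) : UVBGen n → UVBGen (n + 1)
  | Sum.inl i => Sum.inl ⟨i.val, by have := i.isLt; omega⟩
  | Sum.inr i => Sum.inr ⟨i.val, by have := i.isLt; omega⟩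

open UVBGen in
/-- The natural inclusion `UVB n →* UVB (n+1)` (σ_k ↦ σ_k, ρ_k ↦ ρ_k). -/
def incl (n : ℕ) : UVB n →* UVB (n + 1) :=
  PresentedGroup.toGroup (f := fun x => PresentedGroup.of (embedGen n x)) (by
    have key : (FreeGroup.lift fun x => (PresentedGroup.of (embedGen n x) : UVB (n + 1)))
        = (PresentedGroup.mk (uvbRels (n + 1))).comp (FreeGroup.map (embedGen n)) := by
      ext x
      simp [PresentedGroup.of]
    intro r hr
    rw [key]
    simp only [MonoidHom.comp_apply]
    have hmem : FreeGroup.map (embedGen n) r ∈ uvbRels (n + 1) := by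
      have hsg : ∀ i : Fin (n - 1), FreeGroup.map (embedGen n) (sg i)
          = sg (⟨i.val, by have := i.isLt; omega⟩ : Fin (n + 1 - 1)) := by
        intro i; simp [sg, embedGen]
      have hrg : ∀ i : Fin (n - 1), FreeGroup.map (embedGen n) (rg i)
          = rg (⟨i.val, by have := i.isLt; omega⟩ : Fin (n + 1 - 1)) := by
        intro i; simp [rg, embedGen]
      rcases hr with ⟨i, j, hij, hc⟩ | ⟨i, j, hij, hc⟩ | ⟨i, hc⟩
      · refine Or.inl ⟨⟨i.val, by have := i.isLt; omega⟩, ⟨j.val, by have := j.isLt; omega⟩,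
          by simpa using hij, ?_⟩
        rcases hc with h | h | h | h | h <;> subst h <;>
          simp only [map_mul, map_inv, hsg, hrg] <;> tauto
      · refine Or.inr (Or.inl ⟨⟨i.val, by have := i.isLt; omega⟩, ⟨j.val, by have := j.isLt; omega⟩,
          by simpa using hij, ?_⟩)
        rcases hc with h | h | h <;> subst h <;>
          simp only [map_mul, map_inv, hsg, hrg] <;> tauto
      · refine Or.inr (Or.inr ⟨⟨i.val, by have := i.isLt; omega⟩, ?_⟩)
        subst hc
        simp only [map_mul, hsg, hrg]
    exact (QuotientGroup.eq_one_iff _).mpr (Subgroup.subset_normalClosure hmem))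

end UVB

/-- The elementary fused Markov moves on the disjoint union of the groups `UVB n`:
conjugation, and the three right stabilizations (positive, negative, virtual). -/
inductive MarkovBase : (Σ n, UVB n) → (Σ n, UVB n) → Prop
  | conj (n : ℕ) (α γ : UVB n) : MarkovBase ⟨n, α⟩ ⟨n, γ * α * γ⁻¹⟩
  | stabPos (n : ℕ) (α : UVB n) :
      MarkovBase ⟨n, α⟩ ⟨n + 1, UVB.incl n α * UVB.sigma (n + 1) n⟩
  | stabNeg (n : ℕ) (α : UVB n) :
      MarkovBase ⟨n, α⟩ ⟨n + 1, UVB.incl n α * (UVB.sigma (n + 1) n)⁻¹⟩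
  | stabVirt (n : ℕ) (α : UVB n) :
      MarkovBase ⟨n, α⟩ ⟨n + 1, UVB.incl n α * UVB.rho (n + 1) n⟩

/-- Fused Markov equivalence: the smallest equivalence relation generated by the
elementary Markov moves.  By Kamada's theorem, two unrestricted virtual braids are
fused Markov equivalent iff their closures are equivalent fused links. -/
def Markov : (Σ n, UVB n) → (Σ n, UVB n) → Prop := Relation.EqvGen MarkovBase

/-!
The virtual generators span a copy of the symmetric group, because the Coxeter presentation bounds
the order of the group they generate by `n!`. Conjugating `σ₁ρ₁` by this copy gives pure braids
`c i j`, one for each ordered pair of distinct strands, which generate the pure group. All of them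
commute except `c i j` with `c j i`, so the abelianization is free on the `c i j`, and its
coordinates are the pairwise linking numbers.

Markov equivalent pure braids have the same linking matrix up to a permutation of the strands: a map
from the strands onto a set of labels which is constant on the components of the closure has a
matrix of linking numbers between distinct labels, and the matrices obtained in this way do not
change under the Markov moves. For a pure braid on `n` strands and `n` labels the map is a
bijection.

Conversely, the commutators of `c i j` and `c j i` can be absorbed. A stabilization by a
transposition `(l, n + 1)`, followed by a conjugation, replaces `α * c k l * c l k` by
`α * c k (n + 1) * c (n + 1) k * (l, n + 1)`, where `α` commutes with both crossings. After a second
stabilization, by `(k, n + 2)`, the virtual part exchanges `c (n + 1) k` with `c l (n + 2)`, and the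
latter commutes with `c k (n + 1)`. Hence `c (n + 1) k`, carried around the closure twice, ends up
on the other side of `c k (n + 1)`, and undoing the stabilizations gives `α * c l k * c k l`.
-/

section Coxeter

variable {P : Type*} [Group P]

/-- The relations of the Coxeter presentation of type `A` for the family `t 0, …, t (n - 1)`;
the other values of `t` are irrelevant. -/
structure IsCoxeterFamilyA (t : ℕ → P) (n : ℕ) : Prop where
  mul_self : ∀ i, i < n → t i * t i = 1
  braid : ∀ i, i + 1 < n → t i * t (i + 1) * t i = t (i + 1) * t i * t (i + 1)
  comm : ∀ i j, i + 2 ≤ j → j < n → Commute (t i) (t j)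

/-- The descending product `t (k + d - 1) ⋯ t (k + 1) t k`. The products with `k + d = n + 1`
represent the cosets of `⟨t 0, …, t (n - 1)⟩` in `⟨t 0, …, t n⟩`. -/
def descProd (t : ℕ → P) (k : ℕ) : ℕ → P
  | 0 => 1
  | d + 1 => t (k + d) * descProd t k d

lemma descProd_succ_left (t : ℕ → P) (k d : ℕ) :
    descProd t k (d + 1) = descProd t (k + 1) d * t k := by
  induction d with
  | zero => simp [descProd]
  | succ d ih => rw [descProd, ih, descProd, ← mul_assoc, show k + 1 + d = k + (d + 1) by omega]

namespace IsCoxeterFamilyA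

variable {t : ℕ → P} {n : ℕ}

lemma mono (h : IsCoxeterFamilyA t n) {m : ℕ} (hm : m ≤ n) : IsCoxeterFamilyA t m :=
  ⟨fun i hi ↦ h.mul_self i (by omega), fun i hi ↦ h.braid i (by omega),
    fun i j hi hj ↦ h.comm i j hi (by omega)⟩

lemma commute_descProd_of_lt (h : IsCoxeterFamilyA t n) {k d i : ℕ} (hd : k + d ≤ n)
    (hi : i + 1 < k) : Commute (descProd t k d) (t i) := by
  induction d with
  | zero => exact .one_left _
  | succ d ih => exact (h.comm i (k + d) (by omega) (by omega)).symm.mul_left (ih (by omega))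

lemma commute_descProd_of_gt (h : IsCoxeterFamilyA t n) {k d i : ℕ} (hd : k + d < i)
    (hi : i < n) : Commute (descProd t k d) (t i) := by
  induction d with
  | zero => exact .one_left _
  | succ d ih => exact (h.comm (k + d) i (by omega) hi).mul_left (ih (by omega))

lemma descProd_mul_eq_mul_descProd (h : IsCoxeterFamilyA t n) {k d j : ℕ} (hd : k + d ≤ n)
    (hj : j + 1 < d) : descProd t k d * t (k + j + 1) = t (k + j) * descProd t k d := by
  induction d with
  | zero => omega
  | succ d ih =>
    obtain hlt | hle := Nat.lt_or_ge (j + 1) d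
    · rw [descProd, mul_assoc, ih (by omega) hlt, ← mul_assoc, ← mul_assoc,
        (h.comm (k + j) (k + d) (by omega) (by omega)).eq]
    · obtain rfl : d = j + 1 := by omega
      have hfar := (h.commute_descProd_of_gt (k := k) (d := j) (i := k + (j + 1)) (by omega)
        (by omega)).eq
      have hbraid := h.braid (k + j) (by omega)
      simp only [descProd, ← mul_assoc, ← add_assoc] at hfar hbraid ⊢
      rw [mul_assoc _ (descProd t k j), hfar, ← mul_assoc, hbraid]

lemma mul_descProd_mem (h : IsCoxeterFamilyA t (n + 1)) {H : Subgroup P}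
    (hH : ∀ i < n, t i ∈ H) {k i : ℕ} (hk : k ≤ n + 1) (hi : i < n + 1) :
    ∃ y ∈ H, ∃ l ≤ n + 1, descProd t k (n + 1 - k) * t i = y * descProd t l (n + 1 - l) := by
  have descProd_sub (l : ℕ) (hl : l ≤ n) :
      descProd t l (n + 1 - l) = descProd t (l + 1) (n + 1 - (l + 1)) * t l := by
    rw [show n + 1 - l = n - l + 1 by omega, show n + 1 - (l + 1) = n - l by omega,
      descProd_succ_left]
  obtain hlt | rfl | hgt := lt_trichotomy (i + 1) k
  · exact ⟨t i, hH i (by omega), k, hk, h.commute_descProd_of_lt (by omega) hlt⟩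
  · exact ⟨1, one_mem _, i, by omega, by rw [one_mul, descProd_sub i (by omega)]⟩
  obtain rfl | hki := (Nat.lt_succ_iff.mp hgt).eq_or_lt
  · refine ⟨1, one_mem _, k + 1, by omega, ?_⟩
    rw [one_mul, descProd_sub k (by omega), mul_assoc, h.mul_self k hi, mul_one]
  · obtain ⟨j, rfl⟩ := Nat.exists_eq_add_of_lt hki
    exact ⟨t (k + j), hH _ (by omega), k, hk,
      h.descProd_mul_eq_mul_descProd (by omega) (by omega)⟩

open Pointwise in
lemma closure_subset_mul (h : IsCoxeterFamilyA t (n + 1)) :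
    (Subgroup.closure (t '' Set.Iio (n + 1)) : Set P) ⊆
      (Subgroup.closure (t '' Set.Iio n) : Set P) *
        ((fun k ↦ descProd t k (n + 1 - k)) '' Set.Iio (n + 2)) := by
  set H := Subgroup.closure (t '' Set.Iio n)
  have hH (i : ℕ) (hi : i < n) : t i ∈ H := Subgroup.subset_closure ⟨i, hi, rfl⟩
  have mul_mem_right {x : P} {i : ℕ} (hi : i < n + 1)
      (hx : x ∈ (H : Set P) * (fun k ↦ descProd t k (n + 1 - k)) '' Set.Iio (n + 2)) :
      x * t i ∈ (H : Set P) * (fun k ↦ descProd t k (n + 1 - k)) '' Set.Iio (n + 2) := by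
    obtain ⟨y, hy, _, ⟨k, hk, rfl⟩, rfl⟩ := hx
    obtain ⟨z, hz, l, hl, e⟩ := h.mul_descProd_mem hH (Nat.lt_succ_iff.mp hk) hi
    exact ⟨y * z, mul_mem hy hz, _, ⟨l, Nat.lt_succ_iff.mpr hl, rfl⟩, by
      simp only [mul_assoc, e]⟩
  intro x hx
  induction hx using Subgroup.closure_induction_right with
  | one => exact ⟨1, one_mem _, 1, ⟨n + 1, by simp, by simp [descProd]⟩, mul_one 1⟩
  | mul_right x _ y hy ih =>
    obtain ⟨i, hi, rfl⟩ := hy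
    exact mul_mem_right hi ih
  | mul_inv_cancel x _ y hy ih =>
    obtain ⟨i, hi, rfl⟩ := hy
    rw [inv_eq_of_mul_eq_one_left (h.mul_self i hi)]
    exact mul_mem_right hi ih

open Pointwise in
theorem finite_and_card_closure_le (h : IsCoxeterFamilyA t n) :
    Finite (Subgroup.closure (t '' Set.Iio n)) ∧
      Nat.card (Subgroup.closure (t '' Set.Iio n)) ≤ (n + 1).factorial := by
  induction n with
  | zero =>
    have hbot : Subgroup.closure (t '' Set.Iio 0) = ⊥ := by simp
    rw [hbot]
    exact ⟨inferInstance, by simp⟩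
  | succ n ih =>
    obtain ⟨hfin, hcard⟩ := ih (h.mono n.le_succ)
    set D := (fun k ↦ descProd t k (n + 1 - k)) '' Set.Iio (n + 2)
    have hD : D.Finite := (Set.finite_Iio _).image _
    have hDcard : Nat.card D ≤ n + 2 := by
      simpa using Set.ncard_image_le (f := fun k ↦ descProd t k (n + 1 - k))
        (Set.finite_Iio (n + 2))
    have hfin' : ((Subgroup.closure (t '' Set.Iio n) : Set P) * D).Finite :=
      (Set.toFinite _).mul hD
    refine ⟨hfin'.subset h.closure_subset_mul, ?_⟩
    calc Nat.card (Subgroup.closure (t '' Set.Iio (n + 1)))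
        ≤ Nat.card ((Subgroup.closure (t '' Set.Iio n) : Set P) * D : Set P) :=
          Nat.card_mono hfin' h.closure_subset_mul
      _ ≤ Nat.card (Subgroup.closure (t '' Set.Iio n)) * Nat.card D := Set.natCard_mul_le
      _ ≤ (n + 1).factorial * (n + 2) := Nat.mul_le_mul hcard hDcard
      _ = (n + 2).factorial := by rw [Nat.factorial_succ (n + 1), mul_comm]

end IsCoxeterFamilyA

end Coxeter

section Permutations

lemma swap_braid {X : Type*} [DecidableEq X] {a b c : X} (hab : a ≠ b) (hac : a ≠ c)
    (hbc : b ≠ c) : Equiv.swap a b * Equiv.swap b c * Equiv.swap a b =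
      Equiv.swap b c * Equiv.swap a b * Equiv.swap b c := by
  rw [Equiv.swap_mul_swap_mul_swap hab hac, Equiv.swap_comm a b, Equiv.swap_comm b c,
    Equiv.swap_mul_swap_mul_swap hbc.symm hac.symm, Equiv.swap_comm]

lemma commute_swap_swap {X : Type*} [DecidableEq X] {a b c d : X} (h : [a, b, c, d].Nodup) :
    Commute (Equiv.swap a b) (Equiv.swap c d) := by
  simp only [List.nodup_cons, List.mem_cons, not_or] at h
  rw [commute_iff_eq, Equiv.mul_swap_eq_swap_mul, Equiv.swap_apply_of_ne_of_ne,
    Equiv.swap_apply_of_ne_of_ne]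
  all_goals tauto

variable {n : ℕ}

/-- The transposition of the neighbouring points `k` and `k + 1` of `Fin n`, counted from `0`. -/
abbrev adjSwap (k : ℕ) (hk : k + 1 < n) : Equiv.Perm (Fin n) :=
  Equiv.swap ⟨k, by omega⟩ ⟨k + 1, hk⟩

lemma closure_adjSwap_eq_top :
    Subgroup.closure {τ | ∃ k, ∃ hk : k + 1 < n, τ = adjSwap k hk} = ⊤ := by
  obtain _ | n := n
  · exact Subsingleton.elim _ _
  rw [eq_top_iff, ← Subgroup.toSubmonoid_le, Subgroup.top_toSubmonoid,
    ← Equiv.Perm.mclosure_swap_castSucc_succ, Submonoid.closure_le]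
  rintro _ ⟨i, rfl⟩
  exact Subgroup.subset_closure ⟨i, by omega, rfl⟩

lemma perm_hom_ext {G : Type*} [Group G] {f g : Equiv.Perm (Fin n) →* G}
    (h : ∀ k (hk : k + 1 < n), f (adjSwap k hk) = g (adjSwap k hk)) : f = g :=
  MonoidHom.eq_of_eqOn_dense closure_adjSwap_eq_top (by rintro _ ⟨k, hk, rfl⟩; exact h k hk)

lemma viaEmbedding_swap {X Y : Type*} [DecidableEq X] [DecidableEq Y] (f : X ↪ Y) (a b : X) :
    (Equiv.swap a b).viaEmbedding f = Equiv.swap (f a) (f b) := by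
  ext y
  by_cases hy : y ∈ Set.range f
  · obtain ⟨x, rfl⟩ := hy
    rw [Equiv.Perm.viaEmbedding_apply, f.swap_apply]
  · rw [Equiv.Perm.viaEmbedding_apply_of_notMem _ _ _ hy, Equiv.swap_apply_of_ne_of_ne] <;>
      rintro rfl <;> exact hy ⟨_, rfl⟩

lemma viaEmbedding_comp {X Y : Type*} (f : X ↪ Y) (π : Equiv.Perm X) :
    π.viaEmbedding f ∘ f = f ∘ π :=
  funext (π.viaEmbedding_apply f)

lemma viaEmbedding_castSuccEmb_last (π : Equiv.Perm (Fin n)) :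
    π.viaEmbedding Fin.castSuccEmb (Fin.last n) = Fin.last n :=
  Equiv.Perm.viaEmbedding_apply_of_notMem _ _ _ fun ⟨j, hj⟩ ↦ (Fin.castSucc_lt_last j).ne hj

lemma exists_viaEmbedding_eq {X Y : Type*} (f : X ↪ Y) {π : Equiv.Perm Y}
    (hπ : ∀ y ∉ Set.range f, π y = y) : ∃ τ : Equiv.Perm X, τ.viaEmbedding f = π := by
  have hrange (y : Y) : π y ∈ Set.range f ↔ y ∈ Set.range f := by
    by_cases hy : y ∈ Set.range f
    · refine iff_of_true (by_contra fun hn ↦ hn ?_) hy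
      rwa [π.injective (hπ _ hn)]
    · rw [hπ y hy]
  refine ⟨(Equiv.ofInjective f f.injective).symm.permCongr (π.subtypePerm hrange), ?_⟩
  ext y
  by_cases hy : y ∈ Set.range f
  · obtain ⟨x, rfl⟩ := hy
    rw [Equiv.Perm.viaEmbedding_apply, Equiv.permCongr_apply, Equiv.symm_symm,
      Equiv.apply_ofInjective_symm f.injective]
    rfl
  · rw [Equiv.Perm.viaEmbedding_apply_of_notMem _ _ _ hy, hπ y hy]

lemma exists_perm_apply_eq_getElem {l : List (Fin n)} (hl : l.Nodup) :
    ∃ (hn : l.length ≤ n) (π : Equiv.Perm (Fin n)),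
      ∀ i (hi : i < l.length), π ⟨i, hi.trans_le hn⟩ = l[i] := by
  have hn : l.length ≤ n := by simpa using hl.length_le_card
  obtain ⟨π, hπ⟩ := (Equiv.Perm.isMultiplyPretransitive (Fin n) l.length).exists_smul_eq
    (Fin.castLEEmb hn) ⟨l.get, List.nodup_iff_injective_get.mp hl⟩
  exact ⟨hn, π, fun i hi ↦ DFunLike.congr_fun hπ ⟨i, hi⟩⟩

end Permutations

section LinkingModel

/-- The action of permutations of `X` on the free abelian group on `X × X`, written
multiplicatively, by relabelling both coordinates. -/
noncomputable def relabel (X : Type*) :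
    Equiv.Perm X →* MulAut (Multiplicative (X × X →₀ ℤ)) where
  toFun π := AddEquiv.toMultiplicative (Finsupp.domCongr (π.prodCongr π))
  map_one' := by ext; simp [Prod.map, Equiv.Perm.one_def]
  map_mul' π τ := by ext; simp [Prod.map, Equiv.Perm.mul_def]

lemma relabel_ofAdd {X : Type*} (π : Equiv.Perm X) (v : X × X →₀ ℤ) :
    relabel X π (.ofAdd v) = .ofAdd (v.mapDomain (Prod.map π π)) :=
  congrArg Multiplicative.ofAdd (Finsupp.equivMapDomain_eq_mapDomain _ _)

/-- Integer-valued functions on ordered pairs of points of `X`, recording pairwise linking numbers,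
extended by the permutations of `X`. -/
abbrev LinkingModel (X : Type*) := Multiplicative (X × X →₀ ℤ) ⋊[relabel X] Equiv.Perm X

namespace LinkingModel

variable {X : Type*} [DecidableEq X]

/-- The model of a classical crossing between the strands `a` and `b`. -/
noncomputable def sigma (a b : X) : LinkingModel X :=
  ⟨.ofAdd (Finsupp.single (a, b) 1), Equiv.swap a b⟩

/-- The model of a virtual crossing between the strands `a` and `b`. -/
noncomputable def rho (a b : X) : LinkingModel X :=
  SemidirectProduct.inr (Equiv.swap a b)

lemma rho_mul_self (a b : X) : rho a b * rho a b = 1 := by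
  rw [rho, ← map_mul, Equiv.swap_mul_self, map_one]

lemma inr_mul_sigma (π : Equiv.Perm X) (a b : X) :
    SemidirectProduct.inr π * sigma a b = sigma (π a) (π b) * SemidirectProduct.inr π := by
  ext1
  · simp [sigma, relabel_ofAdd, Finsupp.mapDomain_single]
  · simp [sigma, Equiv.mul_swap_eq_swap_mul]

/-- The map of models which relabels linking numbers along an embedding and extends permutations
by the identity. -/
noncomputable def map {Y : Type*} (f : X ↪ Y) : LinkingModel X →* LinkingModel Y :=
  SemidirectProduct.map (Finsupp.mapDomain.addMonoidHom (Prod.map f f)).toMultiplicative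
    (Equiv.Perm.viaEmbeddingHom f) fun π ↦ MonoidHom.ext fun v ↦ by
      obtain ⟨v, rfl⟩ := Multiplicative.ofAdd.surjective v
      simp only [MonoidHom.comp_apply, MulEquiv.coe_toMonoidHom, relabel_ofAdd,
        AddMonoidHom.toMultiplicative_apply_apply, toAdd_ofAdd,
        Finsupp.mapDomain.addMonoidHom_apply, ← Finsupp.mapDomain_comp, Prod.map_comp_map,
        Equiv.Perm.viaEmbeddingHom_apply, viaEmbedding_comp]

lemma map_sigma {Y : Type*} [DecidableEq Y] (f : X ↪ Y) (a b : X) :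
    map f (sigma a b) = sigma (f a) (f b) := by
  ext1
  · simp [sigma, map]
  · exact viaEmbedding_swap f a b

lemma map_rho {Y : Type*} [DecidableEq Y] (f : X ↪ Y) (a b : X) :
    map f (rho a b) = rho (f a) (f b) := by
  ext1
  · simp [rho, map]
  · exact viaEmbedding_swap f a b

section Braid

variable {a b c : X} (hab : a ≠ b) (hac : a ≠ c) (hbc : b ≠ c)
include hab hac hbc

lemma sigma_braid : sigma a b * sigma b c * sigma a b = sigma b c * sigma a b * sigma b c := by
  ext1
  · simp [sigma, relabel_ofAdd, Finsupp.mapDomain_single, Equiv.swap_apply_of_ne_of_ne, hab, hac,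
      hac.symm, hbc.symm, mul_comm, mul_left_comm]
  · exact swap_braid hab hac hbc

lemma rho_braid : rho a b * rho b c * rho a b = rho b c * rho a b * rho b c := by
  simp only [rho, ← map_mul, swap_braid hab hac hbc]

lemma rho_rho_sigma : rho a b * rho b c * sigma a b = sigma b c * rho a b * rho b c := by
  rw [rho, rho, mul_assoc, inr_mul_sigma, ← mul_assoc, inr_mul_sigma,
    Equiv.swap_apply_of_ne_of_ne hab hac, Equiv.swap_apply_left, Equiv.swap_apply_left,
    Equiv.swap_apply_of_ne_of_ne hac.symm hbc.symm]

lemma rho_sigma_sigma : rho a b * sigma b c * sigma a b = sigma b c * sigma a b * rho b c := by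
  ext1
  · simp [sigma, rho, relabel_ofAdd, Finsupp.mapDomain_single, Equiv.swap_apply_of_ne_of_ne, hab,
      hac, hac.symm, hbc.symm, mul_comm]
  · exact swap_braid hab hac hbc

lemma rho_sigma_sigma' : rho b c * sigma a b * sigma b c = sigma a b * sigma b c * rho a b := by
  ext1
  · simp [sigma, rho, relabel_ofAdd, Finsupp.mapDomain_single, Equiv.swap_apply_of_ne_of_ne, hab,
      hac, hac.symm, hbc.symm, mul_comm]
  · exact (swap_braid hab hac hbc).symm

end Braid

section Far

variable {a b c d : X} (h : [a, b, c, d].Nodup)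
include h

lemma commute_rho_rho : Commute (rho a b) (rho c d) := (commute_swap_swap h).map _

lemma commute_sigma_rho : Commute (sigma a b) (rho c d) := by
  simp only [List.nodup_cons, List.mem_cons, not_or] at h
  refine Commute.symm ?_
  rw [commute_iff_eq, rho, inr_mul_sigma, Equiv.swap_apply_of_ne_of_ne,
    Equiv.swap_apply_of_ne_of_ne]
  all_goals tauto

lemma commute_sigma_sigma : Commute (sigma a b) (sigma c d) := by
  have hswap := (commute_swap_swap h).eq
  simp only [List.nodup_cons, List.mem_cons, not_or, ← ne_eq] at h
  ext1
  · simp [sigma, relabel_ofAdd, Finsupp.mapDomain_single, Equiv.swap_apply_of_ne_of_ne, h,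
      h.1.2.1.symm, h.1.2.2.1.symm, h.2.1.1.symm, h.2.1.2.1.symm, mul_comm]
  · exact hswap

end Far

end LinkingModel

end LinkingModel

namespace UVB

section Presentation

variable {n k l : ℕ}

lemma sigma_succ (hk : k + 1 < n) :
    sigma n (k + 1) = PresentedGroup.mk (uvbRels n) (UVBGen.sg ⟨k, by omega⟩) :=
  dif_pos ⟨by omega, by omega⟩

lemma rho_succ (hk : k + 1 < n) :
    rho n (k + 1) = PresentedGroup.mk (uvbRels n) (UVBGen.rg ⟨k, by omega⟩) :=
  dif_pos ⟨by omega, by omega⟩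

lemma mem_of_generators_mem {H : Subgroup (UVB n)}
    (hσ : ∀ k, k + 1 < n → sigma n (k + 1) ∈ H) (hρ : ∀ k, k + 1 < n → rho n (k + 1) ∈ H)
    (g : UVB n) : g ∈ H := by
  refine PresentedGroup.generated_by _ H ?_ g
  rintro (⟨k, hk⟩ | ⟨k, hk⟩)
  · exact Set.mem_of_eq_of_mem (sigma_succ (by omega)).symm (hσ k (by omega))
  · exact Set.mem_of_eq_of_mem (rho_succ (by omega)).symm (hρ k (by omega))

lemma hom_ext {G : Type*} [Group G] {f g : UVB n →* G}
    (hσ : ∀ k, k + 1 < n → f (sigma n (k + 1)) = g (sigma n (k + 1)))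
    (hρ : ∀ k, k + 1 < n → f (rho n (k + 1)) = g (rho n (k + 1))) : f = g :=
  MonoidHom.ext (mem_of_generators_mem (H := f.eqLocus g) hσ hρ)

lemma incl_sigma (hk : k + 1 < n) : incl n (sigma n (k + 1)) = sigma (n + 1) (k + 1) := by
  rw [sigma_succ hk, sigma_succ (by omega)]
  exact PresentedGroup.toGroup.of _

lemma incl_rho (hk : k + 1 < n) : incl n (rho n (k + 1)) = rho (n + 1) (k + 1) := by
  rw [rho_succ hk, rho_succ (by omega)]
  exact PresentedGroup.toGroup.of _

lemma rho_mul_self (hk : k + 1 < n) : rho n (k + 1) * rho n (k + 1) = 1 := by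
  simp only [rho_succ hk, ← map_mul]
  exact PresentedGroup.one_of_mem (Or.inr (Or.inr ⟨_, rfl⟩))

section Braid

variable (hk : k + 2 < n)
include hk

lemma sigma_braid : sigma n (k + 1) * sigma n (k + 2) * sigma n (k + 1) =
    sigma n (k + 2) * sigma n (k + 1) * sigma n (k + 2) := by
  simp only [sigma_succ (show k + 1 < n by omega), sigma_succ (show k + 1 + 1 < n from hk),
    ← map_mul]
  exact PresentedGroup.mk_eq_mk_of_mul_inv_mem (Or.inl ⟨_, _, rfl, by tauto⟩)

lemma rho_braid : rho n (k + 1) * rho n (k + 2) * rho n (k + 1) =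
    rho n (k + 2) * rho n (k + 1) * rho n (k + 2) := by
  simp only [rho_succ (show k + 1 < n by omega), rho_succ (show k + 1 + 1 < n from hk), ← map_mul]
  exact PresentedGroup.mk_eq_mk_of_mul_inv_mem (Or.inl ⟨_, _, rfl, by tauto⟩)

lemma rho_rho_sigma : rho n (k + 1) * rho n (k + 2) * sigma n (k + 1) =
    sigma n (k + 2) * rho n (k + 1) * rho n (k + 2) := by
  simp only [rho_succ (show k + 1 < n by omega), rho_succ (show k + 1 + 1 < n from hk),
    sigma_succ (show k + 1 < n by omega), sigma_succ (show k + 1 + 1 < n from hk), ← map_mul]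
  exact PresentedGroup.mk_eq_mk_of_mul_inv_mem (Or.inl ⟨_, _, rfl, by tauto⟩)

lemma rho_sigma_sigma : rho n (k + 1) * sigma n (k + 2) * sigma n (k + 1) =
    sigma n (k + 2) * sigma n (k + 1) * rho n (k + 2) := by
  simp only [rho_succ (show k + 1 < n by omega), rho_succ (show k + 1 + 1 < n from hk),
    sigma_succ (show k + 1 < n by omega), sigma_succ (show k + 1 + 1 < n from hk), ← map_mul]
  exact PresentedGroup.mk_eq_mk_of_mul_inv_mem (Or.inl ⟨_, _, rfl, by tauto⟩)

lemma rho_sigma_sigma' : rho n (k + 2) * sigma n (k + 1) * sigma n (k + 2) =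
    sigma n (k + 1) * sigma n (k + 2) * rho n (k + 1) := by
  simp only [rho_succ (show k + 1 < n by omega), rho_succ (show k + 1 + 1 < n from hk),
    sigma_succ (show k + 1 < n by omega), sigma_succ (show k + 1 + 1 < n from hk), ← map_mul]
  exact PresentedGroup.mk_eq_mk_of_mul_inv_mem (Or.inl ⟨⟨k, _⟩, ⟨k + 1, _⟩, rfl, by tauto⟩)

end Braid

section Far

variable (hkl : k + 2 ≤ l ∨ l + 2 ≤ k) (hk : k + 1 < n) (hl : l + 1 < n)
include hkl hk hl

lemma commute_sigma_sigma : Commute (sigma n (k + 1)) (sigma n (l + 1)) := by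
  simp only [sigma_succ hk, sigma_succ hl, commute_iff_eq, ← map_mul]
  exact PresentedGroup.mk_eq_mk_of_mul_inv_mem (Or.inr (Or.inl ⟨_, _, hkl, by tauto⟩))

lemma commute_rho_rho : Commute (rho n (k + 1)) (rho n (l + 1)) := by
  simp only [rho_succ hk, rho_succ hl, commute_iff_eq, ← map_mul]
  exact PresentedGroup.mk_eq_mk_of_mul_inv_mem (Or.inr (Or.inl ⟨_, _, hkl, by tauto⟩))

lemma commute_sigma_rho : Commute (sigma n (k + 1)) (rho n (l + 1)) := by
  simp only [sigma_succ hk, rho_succ hl, commute_iff_eq, ← map_mul]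
  exact PresentedGroup.mk_eq_mk_of_mul_inv_mem (Or.inr (Or.inl ⟨_, _, hkl, by tauto⟩))

end Far

end Presentation

section Model

variable {n k : ℕ}

/-- The images of the generators under `toModel`. -/
noncomputable def modelGen (n : ℕ) : UVBGen n → LinkingModel (Fin n)
  | Sum.inl i => LinkingModel.sigma ⟨i, by omega⟩ ⟨i + 1, by omega⟩
  | Sum.inr i => LinkingModel.rho ⟨i, by omega⟩ ⟨i + 1, by omega⟩

open UVBGen in
lemma lift_modelGen_eq_one : ∀ r ∈ uvbRels n, FreeGroup.lift (modelGen n) r = 1 := by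
  have lift_sg (i : Fin (n - 1)) : FreeGroup.lift (modelGen n) (sg i) = modelGen n (.inl i) :=
    FreeGroup.lift_apply_of
  have lift_rg (i : Fin (n - 1)) : FreeGroup.lift (modelGen n) (rg i) = modelGen n (.inr i) :=
    FreeGroup.lift_apply_of
  rintro r (⟨⟨i, hi⟩, ⟨j, hj⟩, hij, hr⟩ | ⟨⟨i, hi⟩, ⟨j, hj⟩, hij, hr⟩ | ⟨i, rfl⟩)
  · obtain rfl : j = i + 1 := hij
    rcases hr with rfl | rfl | rfl | rfl | rfl <;>
      simp only [map_mul, map_inv, mul_inv_eq_one, lift_sg, lift_rg, modelGen]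
    · exact LinkingModel.sigma_braid (by simp) (by grind) (by simp)
    · exact LinkingModel.rho_braid (by simp) (by grind) (by simp)
    · exact LinkingModel.rho_rho_sigma (by simp) (by grind) (by simp)
    · exact LinkingModel.rho_sigma_sigma (by simp) (by grind) (by simp)
    · exact LinkingModel.rho_sigma_sigma' (by simp) (by grind) (by simp)
  · have hnodup : [(⟨i, by omega⟩ : Fin n), ⟨i + 1, by omega⟩, ⟨j, by omega⟩,
        ⟨j + 1, by omega⟩].Nodup := by
      grind
    rcases hr with rfl | rfl | rfl <;>
      simp only [map_mul, map_inv, mul_inv_eq_one, lift_sg, lift_rg, modelGen]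
    · exact LinkingModel.commute_sigma_sigma hnodup
    · exact LinkingModel.commute_rho_rho hnodup
    · exact LinkingModel.commute_sigma_rho hnodup
  · simp only [map_mul, lift_rg, modelGen, LinkingModel.rho_mul_self]

/-- The action on strands together with the matrix of pairwise linking numbers. -/
noncomputable def toModel (n : ℕ) : UVB n →* LinkingModel (Fin n) :=
  PresentedGroup.toGroup lift_modelGen_eq_one

lemma toModel_sigma (hk : k + 1 < n) :
    toModel n (sigma n (k + 1)) = LinkingModel.sigma ⟨k, by omega⟩ ⟨k + 1, hk⟩ := by
  rw [sigma_succ hk]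
  exact PresentedGroup.toGroup.of _

lemma toModel_rho (hk : k + 1 < n) :
    toModel n (rho n (k + 1)) = LinkingModel.rho ⟨k, by omega⟩ ⟨k + 1, hk⟩ := by
  rw [rho_succ hk]
  exact PresentedGroup.toGroup.of _

/-- The underlying permutation of an unrestricted virtual braid, the homomorphism `ι` of the
paper. -/
noncomputable def perm (n : ℕ) : UVB n →* Equiv.Perm (Fin n) :=
  SemidirectProduct.rightHom.comp (toModel n)

lemma perm_sigma (hk : k + 1 < n) : perm n (sigma n (k + 1)) = adjSwap k hk :=
  congrArg SemidirectProduct.right (toModel_sigma hk)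

lemma perm_rho (hk : k + 1 < n) : perm n (rho n (k + 1)) = adjSwap k hk :=
  congrArg SemidirectProduct.right (toModel_rho hk)

lemma eq_perm_of_isIota {ι : UVB n →* Equiv.Perm (Fin n)} (hι : IsIota n ι) : ι = perm n :=
  hom_ext (fun k hk ↦ (hι (k + 1) (by omega) (by omega)).1.trans (perm_sigma hk).symm)
    fun k hk ↦ (hι (k + 1) (by omega) (by omega)).2.trans (perm_rho hk).symm

/-- The matrix of pairwise linking numbers: the coefficient at `(i, j)` counts with sign the
classical crossings of the strands ending at the points `i` and `j`, in this order. -/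
noncomputable def linkingMatrix (g : UVB n) : Fin n × Fin n →₀ ℤ :=
  (toModel n g).left.toAdd

lemma linkingMatrix_mul (g h : UVB n) : linkingMatrix (g * h) =
    linkingMatrix g + (linkingMatrix h).mapDomain (Prod.map (perm n g) (perm n g)) :=
  congrArg Multiplicative.toAdd (by rw [map_mul, SemidirectProduct.mul_left,
    ← ofAdd_toAdd (toModel n h).left, relabel_ofAdd]; rfl)

lemma linkingMatrix_sigma (hk : k + 1 < n) :
    linkingMatrix (sigma n (k + 1)) = Finsupp.single (⟨k, by omega⟩, ⟨k + 1, hk⟩) 1 := by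
  rw [linkingMatrix, toModel_sigma hk, LinkingModel.sigma, toAdd_ofAdd]

lemma linkingMatrix_rho (hk : k + 1 < n) : linkingMatrix (rho n (k + 1)) = 0 := by
  rw [linkingMatrix, toModel_rho hk]
  rfl

end Model

section PermSection

variable {n k : ℕ}

/-- The subgroup of `UVB n` generated by the virtual generators. -/
def virtualSubgroup (n : ℕ) : Subgroup (UVB n) :=
  Subgroup.closure ((fun k ↦ rho n (k + 1)) '' Set.Iio (n - 1))

lemma rho_mem_virtualSubgroup (hk : k + 1 < n) : rho n (k + 1) ∈ virtualSubgroup n :=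
  Subgroup.subset_closure ⟨k, Set.mem_Iio.mpr (by omega), rfl⟩

lemma isCoxeterFamilyA_rho : IsCoxeterFamilyA (fun k ↦ rho n (k + 1)) (n - 1) where
  mul_self _ _ := rho_mul_self (by omega)
  braid _ _ := rho_braid (by omega)
  comm _ _ _ _ := commute_rho_rho (by omega) (by omega) (by omega)

lemma domRestrict_perm_surjective :
    Function.Surjective ((perm n).domRestrict (virtualSubgroup n)) := by
  rw [← MonoidHom.range_eq_top, eq_top_iff, ← closure_adjSwap_eq_top, Subgroup.closure_le]
  rintro _ ⟨k, hk, rfl⟩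
  exact ⟨⟨rho n (k + 1), rho_mem_virtualSubgroup hk⟩, perm_rho hk⟩

lemma domRestrict_perm_bijective :
    Function.Bijective ((perm n).domRestrict (virtualSubgroup n)) := by
  obtain ⟨hfin, hcard⟩ := (isCoxeterFamilyA_rho (n := n)).finite_and_card_closure_le
  have : Finite (virtualSubgroup n) := hfin
  refine domRestrict_perm_surjective.bijective_of_nat_card_le (hcard.trans_eq ?_)
  rw [Nat.card_eq_fintype_card, Fintype.card_perm, Fintype.card_fin]
  cases n <;> rfl

/-- The section `s` of the paper: permutations as purely virtual braids. -/
noncomputable def permSection (n : ℕ) : Equiv.Perm (Fin n) →* UVB n :=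
  (virtualSubgroup n).subtype.comp
    (MulEquiv.ofBijective _ domRestrict_perm_bijective).symm.toMonoidHom

lemma permSection_adjSwap (hk : k + 1 < n) : permSection n (adjSwap k hk) = rho n (k + 1) := by
  have : (MulEquiv.ofBijective _ domRestrict_perm_bijective).symm (adjSwap k hk) =
      (⟨rho n (k + 1), rho_mem_virtualSubgroup hk⟩ : virtualSubgroup n) := by
    rw [MulEquiv.symm_apply_eq]
    exact (perm_rho hk).symm
  exact congrArg Subtype.val this

lemma eq_permSection_of_isPermSection {s : Equiv.Perm (Fin n) →* UVB n} (hs : IsPermSection n s) :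
    s = permSection n :=
  perm_hom_ext fun k hk ↦
    (hs (k + 1) (by omega) (by omega)).trans (permSection_adjSwap hk).symm

lemma toModel_permSection (π : Equiv.Perm (Fin n)) :
    toModel n (permSection n π) = SemidirectProduct.inr π := by
  suffices (toModel n).comp (permSection n) = SemidirectProduct.inr from
    DFunLike.congr_fun this π
  refine perm_hom_ext fun k hk ↦ ?_
  rw [MonoidHom.comp_apply, permSection_adjSwap, toModel_rho hk, LinkingModel.rho]

lemma perm_permSection (π : Equiv.Perm (Fin n)) : perm n (permSection n π) = π :=
  congrArg SemidirectProduct.right (toModel_permSection π)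

lemma linkingMatrix_permSection (π : Equiv.Perm (Fin n)) : linkingMatrix (permSection n π) = 0 :=
  congrArg SemidirectProduct.left (toModel_permSection π)

end PermSection

section Crossing

variable {n : ℕ}

lemma commute_permSection_of_fix_zero_one (hn : 1 < n) {π : Equiv.Perm (Fin n)}
    (h0 : π ⟨0, by omega⟩ = ⟨0, by omega⟩) (h1 : π ⟨1, hn⟩ = ⟨1, hn⟩) :
    Commute (permSection n π) (sigma n 1 * rho n 1) := by
  obtain ⟨m, rfl⟩ := Nat.exists_eq_add_of_le hn
  obtain ⟨τ, rfl⟩ := exists_viaEmbedding_eq (Fin.natAddEmb 2) (π := π) fun i hi ↦ by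
    obtain _ | _ | i := i
    · exact h0
    · exact h1
    · exact absurd ⟨⟨i, by omega⟩, Fin.ext (add_comm 2 i)⟩ hi
  let restricted := (permSection (2 + m)).comp (Equiv.Perm.viaEmbeddingHom (Fin.natAddEmb 2))
  let centralizer := Subgroup.centralizer {sigma (2 + m) 1 * rho (2 + m) 1}
  suffices centralizer.comap restricted = ⊤ from
    (Subgroup.mem_centralizer_singleton_iff.mp (Subgroup.eq_top_iff' _ |>.mp this τ))
  rw [eq_top_iff, ← closure_adjSwap_eq_top, Subgroup.closure_le]
  rintro _ ⟨k, hk, rfl⟩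
  have hρ : restricted (adjSwap k hk) = rho (2 + m) (2 + k + 1) := by
    rw [← permSection_adjSwap (by omega)]
    exact congrArg (permSection (2 + m))
      (viaEmbedding_swap (Fin.natAddEmb 2) ⟨k, by omega⟩ ⟨k + 1, hk⟩)
  refine Subgroup.mem_centralizer_singleton_iff.mpr ?_
  rw [hρ]
  exact ((commute_sigma_rho (k := 0) (by omega) hn (by omega)).mul_left
    (commute_rho_rho (k := 0) (by omega) hn (by omega))).symm

/-- The pure braid in which the strands ending at `i` and `j` cross once classically; it is the
inverse of the paper's `λ_{i,j}`. It is defined as a conjugate of `σ₁ρ₁` by a permutation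
moving the first two strands to `i` and `j`, and is `1` on the diagonal. -/
noncomputable def crossing (i j : Fin n) : UVB n :=
  open scoped Classical in
  if h : ∃ π : Equiv.Perm (Fin n), ((π⁻¹ i : Fin n) : ℕ) = 0 ∧ ((π⁻¹ j : Fin n) : ℕ) = 1 then
    permSection n h.choose * (sigma n 1 * rho n 1) * (permSection n h.choose)⁻¹
  else 1

lemma crossing_self (i : Fin n) : crossing i i = 1 :=
  dif_neg fun ⟨_, _, _⟩ ↦ by omega

lemma crossing_apply (hn : 1 < n) (π : Equiv.Perm (Fin n)) :
    crossing (π ⟨0, by omega⟩) (π ⟨1, hn⟩) =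
      permSection n π * (sigma n 1 * rho n 1) * (permSection n π)⁻¹ := by
  have h : ∃ τ : Equiv.Perm (Fin n), ((τ⁻¹ (π ⟨0, by omega⟩) : Fin n) : ℕ) = 0 ∧
      ((τ⁻¹ (π ⟨1, hn⟩) : Fin n) : ℕ) = 1 := ⟨π, by simp⟩
  obtain ⟨h0, h1⟩ := h.choose_spec
  have hcomm := commute_permSection_of_fix_zero_one hn (π := h.choose⁻¹ * π) (Fin.ext h0)
    (Fin.ext h1)
  calc crossing (π ⟨0, by omega⟩) (π ⟨1, hn⟩)
      = permSection n h.choose * (sigma n 1 * rho n 1) * (permSection n h.choose)⁻¹ := dif_pos h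
    _ = permSection n h.choose * (permSection n (h.choose⁻¹ * π) * (sigma n 1 * rho n 1) *
          (permSection n (h.choose⁻¹ * π))⁻¹) * (permSection n h.choose)⁻¹ := by
        rw [hcomm.mul_inv_cancel]
    _ = permSection n π * (sigma n 1 * rho n 1) * (permSection n π)⁻¹ := by
        rw [map_mul, map_inv]
        group

lemma exists_perm_apply_zero_one {i j : Fin n} (hij : i ≠ j) :
    ∃ (hn : 1 < n) (π : Equiv.Perm (Fin n)), π ⟨0, by omega⟩ = i ∧ π ⟨1, hn⟩ = j := by
  obtain ⟨hn, π, hπ⟩ := exists_perm_apply_eq_getElem (l := [i, j]) (by simpa using hij)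
  exact ⟨hn, π, hπ 0 (by simp), hπ 1 (by simp)⟩

lemma conj_permSection_crossing (π : Equiv.Perm (Fin n)) (i j : Fin n) :
    MulAut.conj (permSection n π) (crossing i j) = crossing (π i) (π j) := by
  obtain rfl | hij := eq_or_ne i j
  · rw [crossing_self, crossing_self, map_one]
  obtain ⟨hn, τ, rfl, rfl⟩ := exists_perm_apply_zero_one hij
  rw [crossing_apply hn, ← Equiv.Perm.mul_apply, ← Equiv.Perm.mul_apply, crossing_apply hn,
    MulAut.conj_apply, map_mul, mul_inv_rev]
  group

lemma permSection_mul_crossing (π : Equiv.Perm (Fin n)) (i j : Fin n) :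
    permSection n π * crossing i j = crossing (π i) (π j) * permSection n π := by
  rw [← conj_permSection_crossing, MulAut.conj_apply, inv_mul_cancel_right]

lemma crossing_adjacent (k : ℕ) (hk : k + 1 < n) :
    crossing (⟨k, by omega⟩ : Fin n) ⟨k + 1, hk⟩ = sigma n (k + 1) * rho n (k + 1) := by
  induction k with
  | zero => simpa using crossing_apply hk 1
  | succ k ih =>
    let π := adjSwap k (by omega) * adjSwap (k + 1) hk
    have hk₀ : π ⟨k, by omega⟩ = ⟨k + 1, by omega⟩ := by
      simp [π, Equiv.swap_apply_def, (show k ≠ k + 1 + 1 by omega)]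
    have hk₁ : π ⟨k + 1, by omega⟩ = ⟨k + 2, hk⟩ := by
      simp [π, Equiv.swap_apply_def, (show k + 1 + 1 ≠ k by omega)]
    have hπ : permSection n π = rho n (k + 1) * rho n (k + 2) := by
      rw [map_mul, permSection_adjSwap, permSection_adjSwap]
    have hconj := permSection_mul_crossing π ⟨k, by omega⟩ ⟨k + 1, by omega⟩
    rw [ih, hk₀, hk₁, hπ] at hconj
    refine mul_right_cancel (hconj.symm.trans ?_)
    rw [← mul_assoc, rho_rho_sigma hk, mul_assoc, mul_assoc, ← mul_assoc (rho n (k + 1)),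
      rho_braid hk]
    simp only [mul_assoc]

lemma crossing_mul_rho {k : ℕ} (hk : k + 1 < n) :
    crossing (⟨k, by omega⟩ : Fin n) ⟨k + 1, hk⟩ * rho n (k + 1) = sigma n (k + 1) := by
  rw [crossing_adjacent, mul_assoc, rho_mul_self hk, mul_one]

lemma toModel_crossing {i j : Fin n} (hij : i ≠ j) :
    toModel n (crossing i j) = SemidirectProduct.inl (.ofAdd (Finsupp.single (i, j) 1)) := by
  obtain ⟨hn, π, rfl, rfl⟩ := exists_perm_apply_zero_one hij
  rw [crossing_apply hn, map_mul, map_mul, map_inv, toModel_permSection, map_mul,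
    toModel_sigma (k := 0) hn, toModel_rho (k := 0) hn, ← mul_assoc, LinkingModel.inr_mul_sigma]
  ext1
  · simp [LinkingModel.sigma, LinkingModel.rho]
  · simp [LinkingModel.sigma, LinkingModel.rho, Equiv.swap_apply_apply, mul_assoc]

lemma crossing_mem_ker_perm (i j : Fin n) : crossing i j ∈ (perm n).ker := by
  obtain rfl | hij := eq_or_ne i j
  · rw [crossing_self]
    exact one_mem _
  · exact congrArg SemidirectProduct.right (toModel_crossing hij)

lemma linkingMatrix_crossing {i j : Fin n} (hij : i ≠ j) :
    linkingMatrix (crossing i j) = Finsupp.single (i, j) 1 :=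
  congrArg (fun g ↦ Multiplicative.toAdd g.left) (toModel_crossing hij)

end Crossing

section Commute

variable {n : ℕ}

lemma commute_crossing_perm_apply {i j k l : Fin n} (h : Commute (crossing i j) (crossing k l))
    (π : Equiv.Perm (Fin n)) : Commute (crossing (π i) (π j)) (crossing (π k) (π l)) := by
  simpa only [conj_permSection_crossing] using h.map (MulAut.conj (permSection n π))

lemma commute_of_braid_relations {G : Type*} [Group G] {a b c r s : G}
    (hrb : r * b = c * r) (hrc : r * c = b * r) (hsa : s * a = c * s) (hsc : s * c = a * s)
    (hrs : r * s * r = s * r * s)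
    (h₁ : r * (b * s) * (a * r) = (b * s) * (a * r) * s)
    (h₂ : s * (a * r) * (b * s) = (a * r) * (b * s) * r)
    (h₃ : (a * r) * (b * s) * (a * r) = (b * s) * (a * r) * (b * s)) :
    Commute c b ∧ Commute c a ∧ Commute a b := by
  have hcb : Commute c b := by
    refine mul_right_cancel (b := r * s * r) ?_
    calc c * b * (r * s * r) = c * (r * c) * s * r := by rw [hrc]; group
      _ = r * b * (s * a) * r := by rw [hrb, hsa]; group
      _ = b * (s * a) * r * s := by simpa only [mul_assoc] using h₁
      _ = b * c * (r * s * r) := by rw [hsa, hrs]; group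
  have hca : Commute c a := by
    refine mul_right_cancel (b := r * s * r) ?_
    calc c * a * (r * s * r) = c * (s * c) * r * s := by rw [hsc, hrs]; group
      _ = s * a * (r * b) * s := by rw [hrb, hsa]; group
      _ = a * (r * b) * s * r := by simpa only [mul_assoc] using h₂
      _ = a * c * (r * s * r) := by rw [hrb]; group
  refine ⟨hcb, hca, mul_left_cancel (a := c) (mul_right_cancel (b := r * s * r) ?_)⟩
  calc c * (a * b) * (r * s * r) = a * (c * b) * (r * s * r) := by rw [hca.left_comm]
    _ = a * c * (r * c) * s * r := by rw [hrc]; group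
    _ = a * (r * b) * (s * a) * r := by rw [hrb, hsa]; group
    _ = b * (s * a) * (r * b) * s := by simpa only [mul_assoc] using h₃
    _ = b * c * (s * c) * r * s := by rw [hrb, hsa]; group
    _ = b * c * a * (r * s * r) := by rw [hsc, hrs]; group
    _ = c * (b * a) * (r * s * r) := by rw [← hcb.eq, mul_assoc c]

lemma commute_crossing_of_adjacent {k : ℕ} (hk : k + 2 < n) :
    let a : Fin n := ⟨k, by omega⟩
    let b : Fin n := ⟨k + 1, by omega⟩
    let c : Fin n := ⟨k + 2, hk⟩
    Commute (crossing a c) (crossing b c) ∧ Commute (crossing a c) (crossing a b) ∧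
      Commute (crossing a b) (crossing b c) := by
  intro a b c
  have hk₁ : k + 1 < n := by omega
  have hr (i j : Fin n) := permSection_mul_crossing (adjSwap k hk₁) i j
  have hs (i j : Fin n) := permSection_mul_crossing (adjSwap (k + 1) hk) i j
  rw [permSection_adjSwap] at hr hs
  have hr_a : adjSwap k hk₁ a = b := Equiv.swap_apply_left _ _
  have hr_b : adjSwap k hk₁ b = a := Equiv.swap_apply_right _ _
  have hr_c : adjSwap k hk₁ c = c := Equiv.swap_apply_of_ne_of_ne (by simp [c]) (by simp [c])
  have hs_a : adjSwap (k + 1) hk a = a :=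
    Equiv.swap_apply_of_ne_of_ne (by simp [a]) (Fin.ne_of_lt (show k < k + 2 by omega))
  have hs_b : adjSwap (k + 1) hk b = c := Equiv.swap_apply_left _ _
  have hs_c : adjSwap (k + 1) hk c = b := Equiv.swap_apply_right _ _
  have h₁ := rho_sigma_sigma hk
  have h₂ := rho_sigma_sigma' hk
  have h₃ := sigma_braid hk
  rw [← crossing_mul_rho hk₁, ← crossing_mul_rho hk] at h₁ h₂ h₃
  refine commute_of_braid_relations (r := rho n (k + 1)) (s := rho n (k + 2)) ?_ ?_ ?_ ?_
    (rho_braid hk) h₁ h₂ h₃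
  · rw [hr, hr_b, hr_c]
  · rw [hr, hr_a, hr_c]
  · rw [hs, hs_a, hs_b]
  · rw [hs, hs_a, hs_c]

lemma commute_crossing_of_distinct₃ {a b c : Fin n} (hab : a ≠ b) (hac : a ≠ c) (hbc : b ≠ c) :
    Commute (crossing a c) (crossing b c) ∧ Commute (crossing a c) (crossing a b) ∧
      Commute (crossing a b) (crossing b c) := by
  obtain ⟨hn, π, hπ⟩ := exists_perm_apply_eq_getElem (l := [a, b, c]) (by simp [*])
  have hn₀ : 0 < n := Nat.zero_lt_of_lt hn
  have hn₁ : 1 < n := Nat.lt_of_succ_lt hn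
  rw [← show π ⟨0, hn₀⟩ = a from hπ 0 (by simp), ← show π ⟨1, hn₁⟩ = b from hπ 1 (by simp),
    ← show π ⟨2, hn⟩ = c from hπ 2 (by simp)]
  obtain ⟨h₁, h₂, h₃⟩ := commute_crossing_of_adjacent hn
  exact ⟨commute_crossing_perm_apply h₁ π, commute_crossing_perm_apply h₂ π,
    commute_crossing_perm_apply h₃ π⟩

lemma commute_crossing_of_distinct₄ {i j k l : Fin n} (h : [i, j, k, l].Nodup) :
    Commute (crossing i j) (crossing k l) := by
  obtain ⟨hn, π, hπ⟩ := exists_perm_apply_eq_getElem h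
  have hn : 3 < n := hn
  have hfar : 0 + 2 ≤ 2 ∨ 2 + 2 ≤ 0 := by omega
  rw [← show π ⟨0, by omega⟩ = i from hπ 0 (by simp),
    ← show π ⟨1, by omega⟩ = j from hπ 1 (by simp),
    ← show π ⟨2, by omega⟩ = k from hπ 2 (by simp), ← show π ⟨3, hn⟩ = l from hπ 3 (by simp)]
  refine commute_crossing_perm_apply ?_ π
  rw [crossing_adjacent 0, crossing_adjacent 2]
  exact ((commute_sigma_sigma hfar (by omega) hn).mul_right
      (commute_sigma_rho hfar (by omega) hn)).mul_left
    ((commute_sigma_rho hfar.symm hn (by omega)).symm.mul_right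
      (commute_rho_rho hfar (by omega) hn))

lemma commute_crossing {i j k l : Fin n} (h : ¬(k = j ∧ l = i)) :
    Commute (crossing i j) (crossing k l) := by
  obtain rfl | hij := eq_or_ne i j
  · rw [crossing_self]
    exact .one_left _
  obtain rfl | hkl := eq_or_ne k l
  · rw [crossing_self]
    exact .one_right _
  obtain rfl | hik := eq_or_ne i k
  · obtain rfl | hjl := eq_or_ne j l
    · exact .refl _
    · exact (commute_crossing_of_distinct₃ hkl hij hjl.symm).2.1
  obtain rfl | hjl := eq_or_ne j l
  · exact (commute_crossing_of_distinct₃ hik hij hkl).1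
  obtain rfl | hil := eq_or_ne i l
  · exact (commute_crossing_of_distinct₃ hkl (by tauto) hij).2.2.symm
  obtain rfl | hjk := eq_or_ne j k
  · exact (commute_crossing_of_distinct₃ hij hil hjl).2.2
  · exact commute_crossing_of_distinct₄ (by simp [*])

end Commute

section Inclusion

variable {n : ℕ}

lemma incl_permSection (π : Equiv.Perm (Fin n)) :
    incl n (permSection n π) = permSection (n + 1) (π.viaEmbedding Fin.castSuccEmb) := by
  suffices (incl n).comp (permSection n) =
      (permSection (n + 1)).comp (Equiv.Perm.viaEmbeddingHom Fin.castSuccEmb) from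
    DFunLike.congr_fun this π
  refine perm_hom_ext fun k hk ↦ ?_
  rw [MonoidHom.comp_apply, permSection_adjSwap, incl_rho hk, MonoidHom.comp_apply,
    Equiv.Perm.viaEmbeddingHom_apply, viaEmbedding_swap]
  exact (permSection_adjSwap _).symm

lemma incl_crossing (i j : Fin n) : incl n (crossing i j) = crossing i.castSucc j.castSucc := by
  obtain rfl | hij := eq_or_ne i j
  · rw [crossing_self, crossing_self, map_one]
  obtain ⟨hn, π, rfl, rfl⟩ := exists_perm_apply_zero_one hij
  have hπ (i : Fin n) : (π i).castSucc = π.viaEmbedding Fin.castSuccEmb i.castSucc :=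
    (π.viaEmbedding_apply Fin.castSuccEmb i).symm
  rw [crossing_apply hn, map_mul, map_mul, map_inv, map_mul, incl_permSection,
    incl_sigma (k := 0) hn, incl_rho (k := 0) hn, hπ, hπ]
  exact (crossing_apply (by omega) _).symm

lemma toModel_incl (g : UVB n) :
    toModel (n + 1) (incl n g) = LinkingModel.map Fin.castSuccEmb (toModel n g) := by
  suffices (toModel (n + 1)).comp (incl n) = (LinkingModel.map Fin.castSuccEmb).comp (toModel n)
    from DFunLike.congr_fun this g
  refine hom_ext (fun k hk ↦ ?_) fun k hk ↦ ?_
  · rw [MonoidHom.comp_apply, MonoidHom.comp_apply, incl_sigma hk, toModel_sigma hk,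
      LinkingModel.map_sigma]
    exact toModel_sigma _
  · rw [MonoidHom.comp_apply, MonoidHom.comp_apply, incl_rho hk, toModel_rho hk,
      LinkingModel.map_rho]
    exact toModel_rho _

lemma perm_incl (g : UVB n) :
    perm (n + 1) (incl n g) = (perm n g).viaEmbedding Fin.castSuccEmb :=
  congrArg SemidirectProduct.right (toModel_incl g)

lemma linkingMatrix_incl (g : UVB n) : linkingMatrix (incl n g) =
    (linkingMatrix g).mapDomain (Prod.map Fin.castSucc Fin.castSucc) :=
  congrArg (fun g ↦ Multiplicative.toAdd g.left) (toModel_incl g)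

end Inclusion

section Pure

variable {n : ℕ}

lemma range_permSection_le_normalizer : (permSection n).range ≤ Subgroup.normalizer
    (Subgroup.closure (Set.range fun p : Fin n × Fin n ↦ crossing p.1 p.2)) := by
  rw [Subgroup.le_normalizer_closure_iff]
  rintro _ ⟨π, rfl⟩ _ ⟨⟨i, j⟩, rfl⟩
  exact Subgroup.subset_closure ⟨(π i, π j), (conj_permSection_crossing π i j).symm⟩

lemma ker_perm_eq_closure :
    (perm n).ker = Subgroup.closure (Set.range fun p : Fin n × Fin n ↦ crossing p.1 p.2) := by
  set C := Subgroup.closure (Set.range fun p : Fin n × Fin n ↦ crossing p.1 p.2)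
  have hCker : C ≤ (perm n).ker := by
    rw [Subgroup.closure_le]
    rintro _ ⟨⟨i, j⟩, rfl⟩
    exact crossing_mem_ker_perm i j
  refine le_antisymm (fun g hg ↦ ?_) hCker
  have rho_mem (k) (hk : k + 1 < n) : rho n (k + 1) ∈ C ⊔ (permSection n).range :=
    Subgroup.mem_sup_right ⟨_, permSection_adjSwap hk⟩
  have hg' : g ∈ C ⊔ (permSection n).range := by
    refine mem_of_generators_mem (fun k hk ↦ ?_) rho_mem g
    rw [← crossing_mul_rho hk]
    exact mul_mem (Subgroup.mem_sup_left (Subgroup.subset_closure ⟨(_, _), rfl⟩)) (rho_mem k hk)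
  rw [← SetLike.mem_coe,
    Subgroup.coe_mul_of_right_le_normalizer_left _ _ range_permSection_le_normalizer] at hg'
  obtain ⟨c, hc, _, ⟨π, rfl⟩, rfl⟩ := hg'
  have hπ : π = 1 := by
    simpa [MonoidHom.mem_ker, MonoidHom.mem_ker.mp (hCker hc), perm_permSection] using hg
  simpa [hπ] using hc

end Pure
end UVB

namespace Markov

open UVB

variable {n : ℕ}

lemma refl (p : Σ n, UVB n) : Markov p p := Relation.EqvGen.refl p

lemma symm {p q : Σ n, UVB n} (h : Markov p q) : Markov q p := Relation.EqvGen.symm _ _ h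

lemma trans {p q r : Σ n, UVB n} (hpq : Markov p q) (hqr : Markov q r) : Markov p r :=
  Relation.EqvGen.trans _ _ _ hpq hqr

lemma conj (α γ : UVB n) : Markov ⟨n, α⟩ ⟨n, γ * α * γ⁻¹⟩ :=
  Relation.EqvGen.rel _ _ (MarkovBase.conj n α γ)

lemma mul_swap (α β : UVB n) : Markov ⟨n, α * β⟩ ⟨n, β * α⟩ := by
  simpa only [mul_assoc, mul_inv_cancel, mul_one] using conj (α * β) β

lemma incl_mul_rho (α : UVB n) : Markov ⟨n, α⟩ ⟨n + 1, incl n α * rho (n + 1) n⟩ :=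
  Relation.EqvGen.rel _ _ (MarkovBase.stabVirt n α)

lemma mul_permSection_swap_last (α : UVB n) (i : Fin n) :
    Markov ⟨n, α⟩
      ⟨n + 1, incl n α * permSection (n + 1) (Equiv.swap i.castSucc (Fin.last n))⟩ := by
  obtain _ | n := n
  · exact i.elim0
  let π := Equiv.swap i (Fin.last n)
  let π' := π.viaEmbedding Fin.castSuccEmb
  let t := permSection (n + 2) (Equiv.swap (Fin.last n).castSucc (Fin.last (n + 1)))
  have ht : t = rho (n + 2) (n + 1) := permSection_adjSwap _
  have hπ : Equiv.swap i.castSucc (Fin.last (n + 1)) =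
      π' * Equiv.swap (Fin.last n).castSucc (Fin.last (n + 1)) * π'⁻¹ := by
    have hlast : π' (Fin.last (n + 1)) = Fin.last (n + 1) :=
      viaEmbedding_castSuccEmb_last _
    have hi : π' (Fin.last n).castSucc = i.castSucc :=
      (π.viaEmbedding_apply Fin.castSuccEmb _).trans (congrArg _ (Equiv.swap_apply_right _ _))
    rw [← Equiv.swap_apply_apply, hlast, hi]
  have hstab := incl_mul_rho ((permSection (n + 1) π)⁻¹ * α * permSection (n + 1) π)
  rw [← ht, map_mul, map_mul, map_inv, incl_permSection] at hstab
  have hα := conj α (permSection (n + 1) π)⁻¹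
  rw [inv_inv] at hα
  refine (hα.trans hstab).trans ?_
  rw [hπ, map_mul, map_mul, map_inv]
  have hconj := conj
    ((permSection (n + 2) π')⁻¹ * incl (n + 1) α * permSection (n + 2) π' * t)
    (permSection (n + 2) π')
  simpa only [mul_assoc, mul_inv_cancel_left] using hconj

lemma mul_of_commute {α w : UVB n} {w' : UVB (n + 1)} (i : Fin n)
    (hw : SemiconjBy (permSection (n + 1) (Equiv.swap i.castSucc (Fin.last n))) w' (incl n w))
    (hα : Commute (incl n α) w') :
    Markov ⟨n, α * w⟩
      ⟨n + 1, incl n α * w' * permSection (n + 1) (Equiv.swap i.castSucc (Fin.last n))⟩ := by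
  have h := (mul_permSection_swap_last (α * w) i).trans
    (by rw [map_mul, mul_assoc, ← hw.eq, ← mul_assoc]; exact mul_swap _ w')
  rwa [← mul_assoc, ← hα.eq] at h

lemma mul_mul_swap {A x y z t : UVB n} (hAy : Commute A y) (hz : Commute z (A * x))
    (htz : SemiconjBy t z y) (hty : SemiconjBy t y z) :
    Markov ⟨n, A * (x * y) * t⟩ ⟨n, A * (y * x) * t⟩ := by
  have h₁ : A * (x * y) * t = (A * x * t) * z := by simp only [mul_assoc, htz.eq]
  have h₂ : z * (A * x * t) = (A * x * t) * y := by
    rw [← mul_assoc, hz.eq, mul_assoc, ← hty.eq, ← mul_assoc]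
  have h₃ : y * (A * x * t) = A * (y * x) * t := by
    simp only [← mul_assoc, hAy.eq]
  rw [h₁, ← h₃]
  exact (mul_swap _ z).trans (h₂ ▸ mul_swap _ y)

end Markov

namespace UVB

section Absorption

open scoped commutatorElement

variable {n : ℕ}

lemma incl_mem_ker_perm {α : UVB n} (hα : α ∈ (perm n).ker) : incl n α ∈ (perm (n + 1)).ker := by
  rw [MonoidHom.mem_ker, perm_incl, MonoidHom.mem_ker.mp hα]
  exact map_one (Equiv.Perm.viaEmbeddingHom Fin.castSuccEmb)

lemma commute_incl_crossing {α : UVB n} (hα : α ∈ (perm n).ker) {a b : Fin (n + 1)}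
    (h : a = Fin.last n ∨ b = Fin.last n) : Commute (incl n α) (crossing a b) := by
  have hle : (perm n).ker ≤ (Subgroup.centralizer {crossing a b}).comap (incl n) := by
    rw [ker_perm_eq_closure, Subgroup.closure_le]
    rintro _ ⟨⟨i, j⟩, rfl⟩
    refine Subgroup.mem_centralizer_singleton_iff.mpr ?_
    rw [incl_crossing]
    refine (commute_crossing fun ⟨ha, hb⟩ ↦ ?_).eq
    exact h.elim (fun h ↦ (Fin.castSucc_lt_last j).ne (ha ▸ h))
      fun h ↦ (Fin.castSucc_lt_last i).ne (hb ▸ h)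
  exact Subgroup.mem_centralizer_singleton_iff.mp (hle hα)

lemma markov_mul_crossing_mul_crossing {α : UVB n} (hα : α ∈ (perm n).ker) {i a b c d : Fin n}
    {a' b' c' d' : Fin (n + 1)} (hab : a' = Fin.last n ∨ b' = Fin.last n)
    (hcd : c' = Fin.last n ∨ d' = Fin.last n)
    (ha : Equiv.swap i.castSucc (Fin.last n) a' = a.castSucc)
    (hb : Equiv.swap i.castSucc (Fin.last n) b' = b.castSucc)
    (hc : Equiv.swap i.castSucc (Fin.last n) c' = c.castSucc)
    (hd : Equiv.swap i.castSucc (Fin.last n) d' = d.castSucc) :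
    Markov ⟨n, α * (crossing a b * crossing c d)⟩
      ⟨n + 1, incl n α * (crossing a' b' * crossing c' d') *
        permSection (n + 1) (Equiv.swap i.castSucc (Fin.last n))⟩ := by
  refine .mul_of_commute i ?_ ((commute_incl_crossing hα hab).mul_right
    (commute_incl_crossing hα hcd))
  rw [map_mul, incl_crossing, incl_crossing, ← ha, ← hb, ← hc, ← hd]
  exact .mul_right (permSection_mul_crossing _ _ _) (permSection_mul_crossing _ _ _)

lemma markov_mul_crossing_mul_permSection {A : UVB n} {k l p q : Fin n}
    (h : [k, l, p, q].Nodup) (hp : Commute A (crossing p k)) (hq : Commute A (crossing l q)) :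
    Markov
      ⟨n, A * (crossing k p * crossing p k) * permSection n (Equiv.swap l p * Equiv.swap k q)⟩
      ⟨n, A * (crossing p k * crossing k p) * permSection n (Equiv.swap l p * Equiv.swap k q)⟩ := by
  simp only [List.nodup_cons, List.mem_cons, List.not_mem_nil, or_false, not_or, ← ne_eq] at h
  obtain ⟨⟨hkl, hkp, hkq⟩, ⟨-, hlq⟩, hpq, -⟩ := h
  have hl : Equiv.swap l p (Equiv.swap k q l) = p := by
    rw [Equiv.swap_apply_of_ne_of_ne hkl.symm hlq, Equiv.swap_apply_left]
  have hq' : Equiv.swap l p (Equiv.swap k q q) = k := by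
    rw [Equiv.swap_apply_right, Equiv.swap_apply_of_ne_of_ne hkl hkp]
  have hp' : Equiv.swap l p (Equiv.swap k q p) = l := by
    rw [Equiv.swap_apply_of_ne_of_ne hkp.symm hpq, Equiv.swap_apply_right]
  have hk : Equiv.swap l p (Equiv.swap k q k) = q := by
    rw [Equiv.swap_apply_left, Equiv.swap_apply_of_ne_of_ne hlq.symm hpq.symm]
  have hlq_pk := permSection_mul_crossing (Equiv.swap l p * Equiv.swap k q) l q
  have hpk_lq := permSection_mul_crossing (Equiv.swap l p * Equiv.swap k q) p k
  rw [Equiv.Perm.mul_apply, Equiv.Perm.mul_apply, hl, hq'] at hlq_pk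
  rw [Equiv.Perm.mul_apply, Equiv.Perm.mul_apply, hp', hk] at hpk_lq
  exact .mul_mul_swap hp (hq.symm.mul_right (commute_crossing fun h ↦ hkq h.1)) hlq_pk hpk_lq

lemma markov_mul_crossing_last_swap {α : UVB n} (hα : α ∈ (perm n).ker) {k l : Fin n}
    (hkl : k ≠ l) :
    Markov
      ⟨n + 1, incl n α * (crossing k.castSucc (Fin.last n) * crossing (Fin.last n) k.castSucc) *
        permSection (n + 1) (Equiv.swap l.castSucc (Fin.last n))⟩
      ⟨n + 1, incl n α * (crossing (Fin.last n) k.castSucc * crossing k.castSucc (Fin.last n)) *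
        permSection (n + 1) (Equiv.swap l.castSucc (Fin.last n))⟩ := by
  refine ((Markov.mul_permSection_swap_last _ k.castSucc).trans ?_).trans
    (Markov.mul_permSection_swap_last _ k.castSucc).symm
  simp only [map_mul, incl_crossing, incl_permSection, viaEmbedding_swap, Fin.coe_castSuccEmb]
  rw [mul_assoc _ (permSection _ _), mul_assoc _ (permSection _ _), ← map_mul]
  refine markov_mul_crossing_mul_permSection ?_ ?_
    (commute_incl_crossing (incl_mem_ker_perm hα) (.inr rfl))
  · have hne (i : Fin n) := (Fin.castSucc_lt_last i).ne
    have hne' (i : Fin (n + 1)) := (Fin.castSucc_lt_last i).ne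
    simp [hkl, hne, hne']
  · rw [← incl_crossing]
    exact (commute_incl_crossing hα (.inl rfl)).map (incl (n + 1))

lemma markov_mul_crossing_swap {α : UVB n} (hα : α ∈ (perm n).ker) {k l : Fin n} (hkl : k ≠ l) :
    Markov ⟨n, α * (crossing k l * crossing l k)⟩ ⟨n, α * (crossing l k * crossing k l)⟩ := by
  have hk : Equiv.swap l.castSucc (Fin.last n) k.castSucc = k.castSucc :=
    Equiv.swap_apply_of_ne_of_ne (by simpa using hkl) (Fin.castSucc_lt_last k).ne
  have hl : Equiv.swap l.castSucc (Fin.last n) (Fin.last n) = l.castSucc :=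
    Equiv.swap_apply_right _ _
  exact ((markov_mul_crossing_mul_crossing hα (.inr rfl) (.inl rfl) hk hl hl hk).trans
    (markov_mul_crossing_last_swap hα hkl)).trans
    (markov_mul_crossing_mul_crossing hα (.inl rfl) (.inr rfl) hl hk hk hl).symm

/-- The pure unrestricted virtual braids which can be dropped from any product of pure ones without
changing its fused Markov class. -/
def absorbed (n : ℕ) : Subgroup (UVB n) where
  carrier := {c | c ∈ (perm n).ker ∧ ∀ α ∈ (perm n).ker, Markov ⟨n, α * c⟩ ⟨n, α⟩}
  one_mem' := ⟨one_mem _, fun α _ ↦ by rw [mul_one]; exact .refl _⟩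
  mul_mem' := by
    rintro a b ⟨ha, ha'⟩ ⟨hb, hb'⟩
    refine ⟨mul_mem ha hb, fun α hα ↦ ?_⟩
    rw [← mul_assoc]
    exact (hb' _ (mul_mem hα ha)).trans (ha' α hα)
  inv_mem' := by
    rintro a ⟨ha, ha'⟩
    refine ⟨inv_mem ha, fun α hα ↦ ?_⟩
    simpa only [inv_mul_cancel_right] using (ha' _ (mul_mem hα (inv_mem ha))).symm

instance : (absorbed n).Normal where
  conj_mem := by
    rintro c ⟨hc, hc'⟩ g
    refine ⟨(perm n).normal_ker.conj_mem c hc g, fun α hα ↦ ?_⟩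
    have hα' : g⁻¹ * α * g ∈ (perm n).ker := by
      simpa only [inv_inv] using (perm n).normal_ker.conj_mem α hα g⁻¹
    have h₁ := Markov.conj (g⁻¹ * α * g * c) g
    have h₂ := Markov.conj (g⁻¹ * α * g) g
    rw [show g * (g⁻¹ * α * g * c) * g⁻¹ = α * (g * c * g⁻¹) by group] at h₁
    rw [show g * (g⁻¹ * α * g) * g⁻¹ = α by group] at h₂
    exact (h₁.symm.trans (hc' _ hα')).trans h₂

lemma commutatorElement_crossing_mem_absorbed (i j k l : Fin n) :
    ⁅crossing i j, crossing k l⁆ ∈ absorbed n := by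
  by_cases h : k = j ∧ l = i
  swap
  · rw [commutatorElement_eq_one_iff_commute.mpr (commute_crossing h)]
    exact one_mem _
  obtain ⟨rfl, rfl⟩ := h
  obtain rfl | hkl := eq_or_ne k l
  · rw [commutatorElement_self]
    exact one_mem _
  rw [commutatorElement_def, mul_assoc, ← mul_inv_rev]
  refine (Subgroup.Normal.mem_comm_iff inferInstance).mpr ?_
  have hpure : crossing k l * crossing l k ∈ (perm n).ker :=
    mul_mem (crossing_mem_ker_perm k l) (crossing_mem_ker_perm l k)
  refine ⟨mul_mem (inv_mem hpure) (mul_mem (crossing_mem_ker_perm l k) (crossing_mem_ker_perm k l)),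
    fun α hα ↦ ?_⟩
  have hswap := markov_mul_crossing_swap (mul_mem hα (inv_mem hpure)) hkl
  rw [inv_mul_cancel_right, mul_assoc] at hswap
  exact hswap.symm

lemma commutator_closure_le {G : Type*} [Group G] {S : Set G} {N : Subgroup G} [N.Normal]
    (h : ∀ x ∈ S, ∀ y ∈ S, ⁅x, y⁆ ∈ N) :
    ⁅Subgroup.closure S, Subgroup.closure S⁆ ≤ N := by
  rw [← QuotientGroup.ker_mk' N, ← Subgroup.map_eq_bot_iff, Subgroup.map_commutator,
    MonoidHom.map_closure, Subgroup.commutator_eq_bot_iff_le_centralizer,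
    Subgroup.centralizer_closure, Subgroup.closure_le]
  rintro _ ⟨x, hx, rfl⟩
  rw [SetLike.mem_coe, Subgroup.mem_centralizer_iff_commutator_eq_one]
  rintro _ ⟨y, hy, rfl⟩
  rw [← map_commutatorElement]
  exact (QuotientGroup.eq_one_iff _).mpr (h y hy x hx)

lemma commutator_ker_perm_le_absorbed : ⁅(perm n).ker, (perm n).ker⁆ ≤ absorbed n := by
  rw [ker_perm_eq_closure]
  refine commutator_closure_le ?_
  rintro _ ⟨⟨i, j⟩, rfl⟩ _ ⟨⟨k, l⟩, rfl⟩
  exact commutatorElement_crossing_mem_absorbed i j k l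

end Absorption

lemma markov_of_conj_mem_commutator {n : ℕ} {α β : UVB n} (hβ : β ∈ (perm n).ker) (γ : UVB n)
    (h : γ * α * γ⁻¹ * β⁻¹ ∈ ⁅(perm n).ker, (perm n).ker⁆) : Markov ⟨n, α⟩ ⟨n, β⟩ := by
  have hswap := Markov.mul_swap (γ * α * γ⁻¹ * β⁻¹) β
  rw [inv_mul_cancel_right] at hswap
  exact ((Markov.conj α γ).trans hswap).trans ((commutator_ker_perm_le_absorbed h).2 β hβ)

end UVB
namespace UVB

section LinkingMatrix

variable {n : ℕ}

lemma linkingMatrix_one : linkingMatrix (1 : UVB n) = 0 :=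
  congrArg SemidirectProduct.left (map_one (toModel n))

lemma linkingMatrix_mul_of_mem_ker {g : UVB n} (hg : g ∈ (perm n).ker) (h : UVB n) :
    linkingMatrix (g * h) = linkingMatrix g + linkingMatrix h := by
  rw [linkingMatrix_mul, MonoidHom.mem_ker.mp hg, Equiv.Perm.coe_one, Prod.map_id,
    Finsupp.mapDomain_id]

lemma linkingMatrix_inv_of_mem_ker {g : UVB n} (hg : g ∈ (perm n).ker) :
    linkingMatrix g⁻¹ = -linkingMatrix g := by
  refine eq_neg_of_add_eq_zero_left ?_
  rw [← linkingMatrix_mul_of_mem_ker (inv_mem hg), inv_mul_cancel, linkingMatrix_one]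

lemma linkingMatrix_conj_permSection (π : Equiv.Perm (Fin n)) (g : UVB n) :
    linkingMatrix (permSection n π * g * (permSection n π)⁻¹) =
      (linkingMatrix g).mapDomain (Prod.map π π) := by
  rw [← map_inv, linkingMatrix_mul, linkingMatrix_mul, linkingMatrix_permSection,
    linkingMatrix_permSection, perm_permSection, zero_add, Finsupp.mapDomain_zero, add_zero]

lemma abelianization_of_eq_prod_crossing (g : UVB n) (hg : g ∈ (perm n).ker) :
    Abelianization.of (⟨g, hg⟩ : (perm n).ker) = (linkingMatrix g).prod fun p k ↦
      Abelianization.of (⟨crossing p.1 p.2, crossing_mem_ker_perm p.1 p.2⟩ : (perm n).ker) ^ k := by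
  have hmem : g ∈ Subgroup.closure (Set.range fun p : Fin n × Fin n ↦ crossing p.1 p.2) :=
    ker_perm_eq_closure.le hg
  induction hmem using Subgroup.closure_induction with
  | mem _ h =>
    obtain ⟨⟨i, j⟩, rfl⟩ := h
    obtain rfl | hij := eq_or_ne i j
    · simp only [crossing_self, linkingMatrix_one, Finsupp.prod_zero_index]
      exact map_one _
    · rw [linkingMatrix_crossing hij, Finsupp.prod_single_index (zpow_zero _), zpow_one]
  | one =>
    rw [linkingMatrix_one, Finsupp.prod_zero_index]
    exact map_one _
  | mul a b ha hb iha ihb =>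
    have ha' := ker_perm_eq_closure.ge ha
    rw [linkingMatrix_mul_of_mem_ker ha',
      Finsupp.prod_add_index' (fun _ ↦ zpow_zero _) (fun _ ↦ zpow_add _), ← iha ha',
      ← ihb (ker_perm_eq_closure.ge hb), ← map_mul]
    rfl
  | inv a ha iha =>
    have ha' := ker_perm_eq_closure.ge ha
    rw [linkingMatrix_inv_of_mem_ker ha', Finsupp.prod_neg_index (fun _ ↦ zpow_zero _)]
    simp only [zpow_neg, Finsupp.prod_inv]
    rw [← iha ha', ← map_inv]
    rfl

lemma mem_commutator_ker_perm {g : UVB n} (hg : g ∈ (perm n).ker)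
    (hlink : ∀ i j, i ≠ j → linkingMatrix g (i, j) = 0) :
    g ∈ ⁅(perm n).ker, (perm n).ker⁆ := by
  have hone : Abelianization.of (⟨g, hg⟩ : (perm n).ker) = 1 := by
    rw [abelianization_of_eq_prod_crossing]
    refine Finset.prod_eq_one fun ⟨i, j⟩ _ ↦ ?_
    obtain rfl | hij := eq_or_ne i j
    · simp only [crossing_self]
      exact (congrArg (· ^ _) (map_one _)).trans (one_zpow _)
    · simp only [hlink i j hij, zpow_zero]
  rw [← MonoidHom.mem_ker, Abelianization.ker_of] at hone
  rw [← Subgroup.map_subtype_commutator]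
  exact ⟨_, hone, rfl⟩

end LinkingMatrix

section Coloring

variable {X : Type*} {n : ℕ}

/-- The matrix of linking numbers between the color classes of a coloring `c` of the strands. -/
noncomputable def linking (c : Fin n → X) (g : UVB n) : X × X →₀ ℤ :=
  (linkingMatrix g).mapDomain (Prod.map c c)

lemma linking_id (g : UVB n) : linking id g = linkingMatrix g := by
  rw [linking, Prod.map_id, Finsupp.mapDomain_id]

lemma linking_mul (c : Fin n → X) (g h : UVB n) :
    linking c (g * h) = linking c g + linking (c ∘ perm n g) h := by
  rw [linking, linkingMatrix_mul, Finsupp.mapDomain_add, ← Finsupp.mapDomain_comp,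
    Prod.map_comp_map]
  rfl

lemma linking_inv (c : Fin n → X) (g : UVB n) :
    linking c g⁻¹ = -linking (c ∘ perm n g⁻¹) g := by
  refine eq_neg_of_add_eq_zero_left ?_
  rw [← linking_mul, inv_mul_cancel, linking, linkingMatrix_one, Finsupp.mapDomain_zero]

lemma linking_incl (c : Fin (n + 1) → X) (g : UVB n) :
    linking c (incl n g) = linking (c ∘ Fin.castSucc) g := by
  rw [linking, linkingMatrix_incl, ← Finsupp.mapDomain_comp, Prod.map_comp_map]
  rfl

/-- `c` labels the components of the closure of `g` by all the elements of `X`, and the linking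
numbers between distinct labels are given by `A`. -/
structure IsColoring (c : Fin n → X) (g : UVB n) (A : X × X → ℤ) : Prop where
  surjective : Function.Surjective c
  comp_perm : c ∘ perm n g = c
  linking_apply : ∀ x y, x ≠ y → linking c g (x, y) = A (x, y)

/-- The invariant of fused links which detects the pairwise linking numbers: the closure of the
braid admits a coloring with linking numbers `A`. -/
def IsColorable (A : X × X → ℤ) (p : Σ n, UVB n) : Prop :=
  ∃ c : Fin p.1 → X, IsColoring c p.2 A

variable {A : X × X → ℤ}

lemma IsColoring.conj {c : Fin n → X} {g : UVB n} (h : IsColoring c g A) (γ : UVB n) :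
    IsColoring (c ∘ perm n γ⁻¹) (γ * g * γ⁻¹) A := by
  have hγ : (c ∘ perm n γ⁻¹) ∘ perm n γ = c := by
    rw [Function.comp_assoc, ← Equiv.Perm.coe_mul, ← map_mul, inv_mul_cancel, map_one]
    rfl
  have hγg : (c ∘ perm n γ⁻¹) ∘ perm n (γ * g) = c := by
    rw [map_mul, Equiv.Perm.coe_mul, ← Function.comp_assoc, hγ, h.comp_perm]
  refine ⟨h.surjective.comp (perm n γ⁻¹).surjective, ?_, fun x y hxy ↦ ?_⟩
  · rw [map_mul, Equiv.Perm.coe_mul, ← Function.comp_assoc, hγg]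
  · rw [linking_mul, linking_mul, hγ, hγg, linking_inv, add_right_comm, add_neg_cancel, zero_add,
      h.linking_apply x y hxy]

lemma isColorable_conj_iff (α γ : UVB n) :
    IsColorable A ⟨n, α⟩ ↔ IsColorable A ⟨n, γ * α * γ⁻¹⟩ := by
  refine ⟨fun ⟨_, h⟩ ↦ ⟨_, h.conj γ⟩, fun ⟨_, h⟩ ↦ ?_⟩
  have h' := h.conj γ⁻¹
  rw [show γ⁻¹ * (γ * α * γ⁻¹) * γ⁻¹⁻¹ = α by group] at h'
  exact ⟨_, h'⟩

lemma comp_swap_eq_self {ι : Type*} [DecidableEq ι] {c : ι → X} {a b : ι} (h : c a = c b) :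
    c ∘ Equiv.swap a b = c := by
  rw [Equiv.comp_swap_eq_update, h, Function.update_eq_self, ← h, Function.update_eq_self]

lemma comp_viaEmbedding_castSucc_eq_self_iff {c : Fin (n + 1) → X} {π : Equiv.Perm (Fin n)} :
    c ∘ π.viaEmbedding Fin.castSuccEmb = c ↔ (c ∘ Fin.castSucc) ∘ π = c ∘ Fin.castSucc := by
  have hcast (i : Fin n) : π.viaEmbedding Fin.castSuccEmb i.castSucc = (π i).castSucc :=
    π.viaEmbedding_apply Fin.castSuccEmb i
  simp only [funext_iff, Fin.forall_fin_succ', Function.comp_apply, hcast,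
    viaEmbedding_castSuccEmb_last, and_true]

lemma comp_castSucc_surjective_iff {c : Fin (n + 2) → X}
    (hc : c (Fin.last n).castSucc = c (Fin.last (n + 1))) :
    Function.Surjective (c ∘ Fin.castSucc) ↔ Function.Surjective c := by
  refine ⟨Function.Surjective.of_comp, fun h x ↦ ?_⟩
  obtain ⟨i, rfl⟩ := h x
  induction i using Fin.lastCases with
  | last => exact ⟨Fin.last n, hc⟩
  | cast i => exact ⟨i, rfl⟩

section Stabilization

variable {g : UVB (n + 1)} {t : UVB (n + 2)}
  (ht : perm (n + 2) t = Equiv.swap (Fin.last n).castSucc (Fin.last (n + 1)))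
include ht

lemma IsColoring.apply_last_castSucc {c : Fin (n + 2) → X}
    (h : IsColoring c (incl (n + 1) g * t) A) :
    c (Fin.last n).castSucc = c (Fin.last (n + 1)) := by
  have := congrFun h.comp_perm (Fin.last n).castSucc
  rw [Function.comp_apply, map_mul, ht, perm_incl, Equiv.Perm.mul_apply, Equiv.swap_apply_left,
    viaEmbedding_castSuccEmb_last] at this
  exact this.symm

variable (hlink : ∀ c : Fin (n + 2) → X, c (Fin.last n).castSucc = c (Fin.last (n + 1)) →
  ∀ x y, x ≠ y → linking c t (x, y) = 0)
include hlink

lemma isColoring_incl_mul_iff {c : Fin (n + 2) → X}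
    (hc : c (Fin.last n).castSucc = c (Fin.last (n + 1))) :
    IsColoring c (incl (n + 1) g * t) A ↔ IsColoring (c ∘ Fin.castSucc) g A := by
  have hcomp : c ∘ perm (n + 2) (incl (n + 1) g * t) = c ↔
      c ∘ perm (n + 2) (incl (n + 1) g) = c := by
    have hswap := comp_swap_eq_self hc
    rw [map_mul, Equiv.Perm.coe_mul, ht, ← Function.comp_assoc]
    exact (Equiv.eq_comp_symm _ _ _).symm.trans (by rw [Equiv.symm_swap, hswap])
  have hlinking (h : c ∘ perm (n + 2) (incl (n + 1) g) = c) {x y : X} (hxy : x ≠ y) :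
      linking c (incl (n + 1) g * t) (x, y) = linking (c ∘ Fin.castSucc) g (x, y) := by
    rw [linking_mul, h, linking_incl, Finsupp.add_apply, hlink c hc x y hxy, add_zero]
  constructor
  · rintro ⟨hsurj, hperm, hA⟩
    rw [hcomp] at hperm
    refine ⟨(comp_castSucc_surjective_iff hc).mpr hsurj, ?_, fun x y hxy ↦ ?_⟩
    · rwa [← comp_viaEmbedding_castSucc_eq_self_iff, ← perm_incl]
    · rw [← hlinking hperm hxy, hA x y hxy]
  · rintro ⟨hsurj, hperm, hA⟩
    rw [← comp_viaEmbedding_castSucc_eq_self_iff, ← perm_incl] at hperm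
    refine ⟨(comp_castSucc_surjective_iff hc).mp hsurj, hcomp.mpr hperm, fun x y hxy ↦ ?_⟩
    rw [hlinking hperm hxy, hA x y hxy]

lemma isColorable_incl_mul_iff :
    IsColorable A ⟨n + 1, g⟩ ↔ IsColorable A ⟨n + 2, incl (n + 1) g * t⟩ := by
  constructor
  · rintro ⟨c, h⟩
    let c' : Fin (n + 2) → X := Fin.snoc c (c (Fin.last n))
    have hcast : c' ∘ Fin.castSucc = c := Fin.snoc_comp_castSucc
    have hlast : c' (Fin.last n).castSucc = c' (Fin.last (n + 1)) :=
      (Fin.snoc_castSucc (α := fun _ ↦ X) _ _ _).trans (Fin.snoc_last (α := fun _ ↦ X) _ _).symm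
    refine ⟨c', (isColoring_incl_mul_iff ht hlink hlast).mpr ?_⟩
    rwa [hcast]
  · rintro ⟨c, h⟩
    exact ⟨_, (isColoring_incl_mul_iff ht hlink (h.apply_last_castSucc ht)).mp h⟩

end Stabilization

lemma linking_sigma_apply_eq_zero {c : Fin (n + 2) → X}
    (hc : c (Fin.last n).castSucc = c (Fin.last (n + 1))) {x y : X} (hxy : x ≠ y) :
    linking c (sigma (n + 2) (n + 1)) (x, y) = 0 := by
  rw [linking, linkingMatrix_sigma (by omega), Finsupp.mapDomain_single]
  refine Finsupp.single_eq_of_ne fun h ↦ hxy ?_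
  exact (congrArg Prod.fst h).trans (hc.trans (congrArg Prod.snd h).symm)

lemma not_isColorable_of_subsingleton [Nontrivial X] (hn : n ≤ 1) (g : UVB n) :
    ¬ IsColorable A ⟨n, g⟩ := by
  rintro ⟨c, h⟩
  have := Fin.subsingleton_iff_le_one.mpr hn
  have := h.surjective.subsingleton
  exact not_subsingleton X this

lemma isColorable_iff_of_markovBase [Nontrivial X] {p q : Σ n, UVB n} (h : MarkovBase p q) :
    IsColorable A p ↔ IsColorable A q := by
  have hsigma (n : ℕ) : perm (n + 2) (sigma (n + 2) (n + 1)) = adjSwap n (by omega) :=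
    perm_sigma _
  cases h with
  | conj n α γ => exact isColorable_conj_iff α γ
  | stabPos n α =>
    obtain _ | n := n
    · exact iff_of_false (not_isColorable_of_subsingleton zero_le_one _)
        (not_isColorable_of_subsingleton le_rfl _)
    exact isColorable_incl_mul_iff (hsigma n) fun _ hc _ _ ↦ linking_sigma_apply_eq_zero hc
  | stabNeg n α =>
    obtain _ | n := n
    · exact iff_of_false (not_isColorable_of_subsingleton zero_le_one _)
        (not_isColorable_of_subsingleton le_rfl _)
    have hinv : perm (n + 2) (sigma (n + 2) (n + 1))⁻¹ = adjSwap n (by omega) := by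
      rw [map_inv, hsigma]
      exact Equiv.swap_inv _ _
    refine isColorable_incl_mul_iff hinv fun c hc x y hxy ↦ ?_
    rw [linking_inv, hinv, show c ∘ adjSwap n _ = c from comp_swap_eq_self hc, Finsupp.neg_apply,
      linking_sigma_apply_eq_zero hc hxy, neg_zero]
  | stabVirt n α =>
    obtain _ | n := n
    · exact iff_of_false (not_isColorable_of_subsingleton zero_le_one _)
        (not_isColorable_of_subsingleton le_rfl _)
    refine isColorable_incl_mul_iff (perm_rho _) fun c _ x y _ ↦ ?_
    rw [linking, linkingMatrix_rho (by omega), Finsupp.mapDomain_zero, Finsupp.zero_apply]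

lemma isColorable_iff_of_markov [Nontrivial X] {p q : Σ n, UVB n} (h : Markov p q) :
    IsColorable A p ↔ IsColorable A q := by
  induction h with
  | rel _ _ h => exact isColorable_iff_of_markovBase h
  | refl _ => exact .rfl
  | symm _ _ _ h => exact h.symm
  | trans _ _ _ _ _ h₁ h₂ => exact h₁.trans h₂

lemma isColoring_id {g : UVB n} (hg : g ∈ (perm n).ker) : IsColoring id g (linkingMatrix g) :=
  ⟨Function.surjective_id, by rw [MonoidHom.mem_ker.mp hg]; rfl, fun _ _ _ ↦ by rw [linking_id]⟩

lemma exists_conj_mem_commutator_of_markov [Nontrivial (Fin n)] {α β : UVB n}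
    (hα : α ∈ (perm n).ker) (hβ : β ∈ (perm n).ker) (h : Markov ⟨n, α⟩ ⟨n, β⟩) :
    ∃ π : Equiv.Perm (Fin n), permSection n π * α * (permSection n π)⁻¹ * β⁻¹ ∈
      ⁅(perm n).ker, (perm n).ker⁆ := by
  obtain ⟨c, hc⟩ := (isColorable_iff_of_markov h).mp ⟨id, isColoring_id hα⟩
  have hbij : Function.Bijective c := Finite.surjective_iff_bijective.mp hc.surjective
  let τ := Equiv.ofBijective c hbij
  have hconj : permSection n τ.symm * α * (permSection n τ.symm)⁻¹ ∈ (perm n).ker :=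
    (perm n).normal_ker.conj_mem α hα _
  refine ⟨τ.symm, mem_commutator_ker_perm (mul_mem hconj (inv_mem hβ)) fun i j hij ↦ ?_⟩
  have hα_apply : (linkingMatrix α).mapDomain (Prod.map τ.symm τ.symm) (i, j) =
      linkingMatrix α (c i, c j) := by
    have h := Finsupp.mapDomain_apply (τ.symm.injective.prodMap τ.symm.injective) (linkingMatrix α)
      (τ i, τ j)
    rwa [Prod.map_apply, Equiv.symm_apply_apply, Equiv.symm_apply_apply] at h
  have hβ_apply : linkingMatrix β (i, j) = linkingMatrix α (c i, c j) := by
    rw [← hc.linking_apply _ _ (hbij.injective.ne hij)]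
    exact (Finsupp.mapDomain_apply (hbij.injective.prodMap hbij.injective) _ (i, j)).symm
  rw [linkingMatrix_mul_of_mem_ker hconj, linkingMatrix_conj_permSection,
    linkingMatrix_inv_of_mem_ker hβ, Finsupp.add_apply, Finsupp.neg_apply, hα_apply, hβ_apply,
    add_neg_cancel]

end Coloring

end UVB

/-! ## Statement 10 -/

/-- main theorem of the paper for pure braids.  For `n ≥ 2` and
α, β ∈ UVP n: α and β are fused Markov equivalent (i.e. their closures are equivalent
fused links) iff there is a permutation π ∈ S_n with
`s(π) α s(π)⁻¹ β⁻¹ ∈ [UVP n, UVP n]` (i.e. their images in the abelianization of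
UVP n are conjugate by an element of S_n ≤ UVB n). -/
theorem statement10 (n : ℕ) (hn : 2 ≤ n)
    (ι : UVB n →* Equiv.Perm (Fin n)) (hι : IsIota n ι)
    (s : Equiv.Perm (Fin n) →* UVB n) (hs : IsPermSection n s)
    (α β : UVB n) (hα : α ∈ ι.ker) (hβ : β ∈ ι.ker) :
    Markov ⟨n, α⟩ ⟨n, β⟩ ↔
      ∃ π : Equiv.Perm (Fin n), s π * α * (s π)⁻¹ * β⁻¹ ∈ ⁅ι.ker, ι.ker⁆ := by
  obtain rfl := UVB.eq_perm_of_isIota hι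
  obtain rfl := UVB.eq_permSection_of_isPermSection hs
  have : Nontrivial (Fin n) := Fin.nontrivial_iff_two_le.mpr hn
  exact ⟨UVB.exists_conj_mem_commutator_of_markov hα hβ,
    fun ⟨π, hπ⟩ ↦ UVB.markov_of_conj_mem_commutator hβ _ hπ⟩
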